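/- arXiv:1201.1263 — 2 statements merged into one kernel-verified Lean document; each statement's English description precedes it below -/
import Mathlib

section
/- Let R be a commutative Noetherian ring of prime characteristic p and M any R-module. Then the support of F_R(M) equals the support of M, i.e., Supp_R F_R(M) = Supp_R M. -/
/-!
The inclusion `Supp F(M) ⊆ Supp M` is formal: if `s` kills `m`, then `s ^ p` kills `r ⊗ m`.

For the converse, suppose first that the Frobenius `R → R` is a finite map. Then `R^f` is a finitely
generated `R`-module with full support, and for such a module `N` over a Noetherian ring
`N ⊗ M = 0` forces `M = 0`, for every `M` (`subsingleton_of_subsingleton_tensor`, proved by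
Noetherian induction on ideals `I` with the claim `I M = M`; for `I` prime one uses a nonzero map
`N → R ⧸ I`). Applied to localizations, this would give the theorem.

In general one enlarges the local ring `R_P` to a Noetherian ring `R'` with finite Frobenius such
that `N ≠ 0` implies `R' ⊗ N ≠ 0` (`exists_frobenius_finite_of_isLocalRing`). The completion `C` of
`R_P` is faithfully flat over `R_P` and is a quotient of some `S = k⟦X₁, …, Xₙ⟧`, where `k` is the
residue field (`exists_surjective_mvPowerSeries`); the coefficient field exists because `k` is
formally smooth over the prime field (`formallySmooth_field_of_perfectField`). With `K` an algebraic
closure of `k` and `S' = K⟦X₁, …, Xₙ⟧`, put `R' = C ⊗[S] S'`. It is a quotient of `S'`, so it is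
Noetherian and its Frobenius is finite, like that of `S'`. A `k`-linear retraction `K → k`, applied to
coefficients, is an `S`-linear retraction `S' → S`, so `C` is a direct summand of `R'` and
`C`-modules are not killed by `R' ⊗ -`. No flatness of `R'` over `C` is needed.

Finally, if `P ∉ Supp F(M)`, every `1 ⊗ m` in `F(M)` is killed by some `s ∉ P`, which becomes a unit
in `R'`; hence the Frobenius twist of `R' ⊗ M` vanishes, so `R' ⊗ M = 0`, and so `M_P = 0`.
-/

open TensorProduct IsLocalRing

universe u v

/-- `R` viewed as an `R`-algebra via the Frobenius `r ↦ r ^ p`.  As an `R`-module this is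
the right-module structure of the bimodule `R^f`, i.e. `s · r = s * r ^ p`. -/
def FrobTwist (R : Type u) [CommRing R] (p : ℕ) [Fact p.Prime] [CharP R p] : Type u := R

noncomputable instance (R : Type u) [CommRing R] (p : ℕ) [Fact p.Prime] [CharP R p] :
    CommRing (FrobTwist R p) := inferInstanceAs (CommRing R)

noncomputable instance (R : Type u) [CommRing R] (p : ℕ) [Fact p.Prime] [CharP R p] :
    Algebra R (FrobTwist R p) := (frobenius R p).toAlgebra

/-- The element of `FrobTwist R p` corresponding to `r : R`. -/
def FrobTwist.of (R : Type u) [CommRing R] (p : ℕ) [Fact p.Prime] [CharP R p] (r : R) :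
    FrobTwist R p := r

/-- The Frobenius functor `F_R(M) = R^f ⊗_R M`, with its left `R`-module structure
coming from multiplication on the left tensor factor. -/
def FrobModule (R : Type u) [CommRing R] (p : ℕ) [Fact p.Prime] [CharP R p]
    (M : Type v) [AddCommGroup M] [Module R M] : Type (max u v) :=
  FrobTwist R p ⊗[R] M

noncomputable instance (R : Type u) [CommRing R] (p : ℕ) [Fact p.Prime] [CharP R p]
    (M : Type v) [AddCommGroup M] [Module R M] : AddCommGroup (FrobModule R p M) :=
  inferInstanceAs (AddCommGroup (FrobTwist R p ⊗[R] M))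

noncomputable instance (R : Type u) [CommRing R] (p : ℕ) [Fact p.Prime] [CharP R p]
    (M : Type v) [AddCommGroup M] [Module R M] : Module R (FrobModule R p M) :=
  inferInstanceAs (Module (FrobTwist R p) (FrobTwist R p ⊗[R] M))

theorem charP_of_algebra (A B : Type*) [CommRing A] [CommRing B] [Algebra A B] [Nontrivial B] (p : ℕ)
    [Fact p.Prime] [CharP A p] : CharP B p :=
  (CharP.charP_iff_prime_eq_zero Fact.out).mpr
    (by rw [← map_natCast (algebraMap A B), CharP.cast_eq_zero, map_zero])

/-! ### Coefficient fields and power series -/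

/-- Every field extension `k` of a perfect field `F` is formally smooth. Mathlib has the case where `k`
is finitely generated; a class in `H₁` of the cotangent complex is represented by a polynomial in
finitely many variables, so it already comes from a finitely generated subfield. -/
theorem formallySmooth_field_of_perfectField (F : Type u) (k : Type v) [Field F] [PerfectField F] [Field k]
    [Algebra F k] : Algebra.FormallySmooth F k := by
  refine ⟨inferInstance, ⟨fun z w ↦ ?_⟩⟩
  suffices H : ∀ z : Algebra.H1Cotangent F k, z = 0 by rw [H z, H w]
  clear z w
  rintro ⟨z, hz⟩
  obtain ⟨⟨x, hx⟩, rfl⟩ := Algebra.Extension.Cotangent.mk_surjective z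
  let X : MvPolynomial k F := x
  -- the subfield generated by the finitely many variables (elements of `k`) occurring in `X`
  let k' := IntermediateField.adjoin F (X.vars : Set k)
  have : Algebra.EssFiniteType F k' := by
    exact IntermediateField.essFiniteType_iff.mpr ⟨X.vars, rfl⟩
  have : Algebra.FormallySmooth F k' := inferInstance
  have := this.subsingleton_h1Cotangent
  obtain ⟨y, hyx⟩ : ∃ y : MvPolynomial k' F, MvPolynomial.rename (algebraMap k' k) y = X :=
    MvPolynomial.exists_rename_eq_of_vars_subset_range X _ (algebraMap k' k).injective
      (fun a ha ↦ ⟨⟨a, IntermediateField.subset_adjoin _ _ ha⟩, rfl⟩)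
  let P := Algebra.Generators.self F k
  let P' := Algebra.Generators.self F k'
  have hval (q : MvPolynomial k' F) : MvPolynomial.aeval P.val (MvPolynomial.rename (algebraMap k' k) q)
      = algebraMap k' k (MvPolynomial.aeval P'.val q) := by
    rw [MvPolynomial.aeval_rename, ← MvPolynomial.aeval_algebraMap_apply]
    rfl
  have hy : y ∈ P'.ker := by
    rw [Algebra.Generators.ker_eq_ker_aeval_val, RingHom.mem_ker]
    apply (algebraMap k' k).injective
    erw [← hval, hyx]
    rw [map_zero]
    exact Algebra.Generators.aeval_val_eq_zero (P := P) hx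
  -- the differential of `y` vanishes because that of `X` does: compare partial derivatives
  have hc : P'.toExtension.cotangentComplex (.mk ⟨y, hy⟩) = 0 := by
    apply P'.cotangentSpaceBasis.repr.injective
    refine Finsupp.ext fun i ↦ (algebraMap k' k).injective ?_
    rw [Algebra.Extension.cotangentComplex_mk]
    have h0 : P.cotangentSpaceBasis.repr (P.toExtension.cotangentComplex (.mk ⟨_, hx⟩))
      (algebraMap k' k i) = 0 := by
        rw [show P.toExtension.cotangentComplex (.mk ⟨_, hx⟩) = 0 from hz]; simp
    rw [Algebra.Extension.cotangentComplex_mk] at h0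
    erw [Algebra.Generators.cotangentSpaceBasis_repr_one_tmul] at h0 ⊢
    have h0' : MvPolynomial.aeval P.val (MvPolynomial.pderiv (algebraMap k' k i) X) = 0 := h0
    rw [← hyx, MvPolynomial.pderiv_rename (algebraMap k' k).injective, hval] at h0'
    simpa using h0'
  have h0 : (⟨.mk ⟨y, hy⟩, hc⟩ : Algebra.H1Cotangent F k') = 0 :=
    @Subsingleton.elim _ this _ _
  have h1 : Algebra.Extension.Cotangent.mk (P := P'.toExtension) ⟨y, hy⟩ = 0 := congrArg Subtype.val h0
  have h2 := congrArg (Algebra.Extension.Cotangent.map (P' := P.toExtension)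
    (Algebra.Generators.defaultHom P' P).toExtensionHom) h1
  apply Subtype.ext
  rw [map_zero, Algebra.Extension.Cotangent.map_mk] at h2
  refine Eq.trans ?_ h2
  change Algebra.Extension.Cotangent.mk _ = Algebra.Extension.Cotangent.mk _
  congr 2
  change X = MvPolynomial.aeval _ y
  rw [← hyx, ← MvPolynomial.aeval_X_left_apply (MvPolynomial.rename _ y), MvPolynomial.aeval_rename]
  rfl

/-- Evaluation of power series at elements of `I`, when the target is `I`-adically complete. -/
theorem exists_mvPowerSeries_lift {k C : Type*} [CommRing k] [CommRing C] (I : Ideal C) [IsAdicComplete I C]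
    (s : k →+* C) {n : ℕ} (x : Fin n → C) (hx : ∀ i, x i ∈ I) :
    ∃ q : MvPowerSeries (Fin n) k →+* C, ∀ f : MvPolynomial (Fin n) k,
      q f = MvPolynomial.eval₂Hom s x f := by
  let g : MvPolynomial (Fin n) k →+* C := MvPolynomial.eval₂Hom s x
  have hg : MvPolynomial.idealOfVars (Fin n) k ≤ I.comap g := by
    rw [MvPolynomial.idealOfVars, Ideal.span_le]
    rintro _ ⟨i, rfl⟩
    simpa [g] using hx i
  have hgn (m : ℕ) (y) (hy : y ∈ MvPolynomial.idealOfVars (Fin n) k ^ m) : g y ∈ I ^ m := by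
    have := Ideal.pow_right_mono hg m hy
    exact Ideal.le_comap_pow g m this
  let f (m : ℕ) : MvPowerSeries (Fin n) k →+* C ⧸ I ^ m :=
    (Ideal.Quotient.lift (MvPolynomial.idealOfVars (Fin n) k ^ m) ((Ideal.Quotient.mk (I ^ m)).comp g)
      (fun y hy ↦ Ideal.Quotient.eq_zero_iff_mem.mpr (hgn m y hy))).comp
      (MvPowerSeries.truncTotalAlgHom (Fin n) k m).toRingHom
  have hf0 (m : ℕ) (y) : f m y = Ideal.Quotient.mk _ (g (MvPowerSeries.truncTotal m y)) := rfl
  have hf {m m' : ℕ} (hle : m ≤ m') :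
      (Ideal.Quotient.factorPow I hle).comp (f m') = f m := by
    ext y
    rw [RingHom.comp_apply, hf0, hf0]
    change Ideal.Quotient.mk _ _ = _
    rw [Ideal.Quotient.mk_eq_mk_iff_sub_mem, ← map_sub]
    exact hgn _ _ (MvPowerSeries.truncTotal_sub_truncTotal_mem_pow_idealOfVars hle le_rfl y)
  refine ⟨IsAdicComplete.liftRingHom I f hf, fun y ↦ ?_⟩
  rw [← sub_eq_zero]
  refine IsHausdorff.haus' (I := I) _ fun m ↦ ?_
  rw [SModEq.zero, smul_eq_mul, Ideal.mul_top, ← Ideal.Quotient.mk_eq_mk_iff_sub_mem,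
    IsAdicComplete.mk_liftRingHom, hf0, Ideal.Quotient.mk_eq_mk_iff_sub_mem]
  change g _ - g _ ∈ _
  rw [← map_sub]
  refine hgn _ _ ((MvPolynomial.mem_pow_idealOfVars_iff' ..).mpr fun d hd ↦ ?_)
  rw [MvPolynomial.coeff_sub, sub_eq_zero, MvPowerSeries.coeff_truncTotal _ hd,
    MvPolynomial.coeff_coe]

/-- The Cohen structure theorem in equal characteristic `p`: a complete local ring with finitely
generated maximal ideal is a quotient of a power series ring over its residue field. -/
theorem exists_surjective_mvPowerSeries (C : Type u) [CommRing C] [IsLocalRing C]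
    [IsAdicComplete (maximalIdeal C) C] (hfg : (maximalIdeal C).FG) (p : ℕ) [Fact p.Prime] [CharP C p] :
    ∃ (n : ℕ) (q : MvPowerSeries (Fin n) (ResidueField C) →+* C), Function.Surjective q := by
  let := ZMod.algebra C p
  let : Algebra (ZMod p) (ResidueField C) := ((IsLocalRing.residue C).comp (algebraMap (ZMod p) C)).toAlgebra
  have := formallySmooth_field_of_perfectField (ZMod p) (ResidueField C)
  let id' : ResidueField C →ₐ[ZMod p] C ⧸ maximalIdeal C :=
    { RingHom.id _ with commutes' := fun _ ↦ rfl }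
  obtain ⟨s, hs⟩ := Algebra.FormallySmooth.exists_mkₐ_comp_eq_of_isAdicComplete id'
  obtain ⟨n, x, hx⟩ := Submodule.fg_iff_exists_fin_generating_family.mp hfg
  obtain ⟨q, hq⟩ := exists_mvPowerSeries_lift (maximalIdeal C) s.toRingHom x
    (fun i ↦ hx ▸ Submodule.subset_span ⟨i, rfl⟩)
  have hI : (Ideal.span (Set.range MvPowerSeries.X)).map q = maximalIdeal C := by
    rw [Ideal.map_span, ← Set.range_comp, ← hx]
    congr 2
    ext i
    rw [Function.comp_apply, ← MvPolynomial.coe_X, hq]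
    simp
  refine ⟨n, q, ?_⟩
  have : IsHausdorff ((Ideal.span (Set.range MvPowerSeries.X)).map q) C := by
    rw [hI]; infer_instance
  apply surjective_of_mk_map_comp_surjective (I := Ideal.span (Set.range MvPowerSeries.X)) q
  rw [hI]
  intro y
  refine ⟨((MvPolynomial.C (show ResidueField C from y) : MvPolynomial (Fin n) (ResidueField C)) :
    MvPowerSeries (Fin n) (ResidueField C)), ?_⟩
  rw [RingHom.comp_apply, hq, MvPolynomial.coe_eval₂Hom, MvPolynomial.eval₂_C]
  exact DFunLike.congr_fun hs y

/-! ### Finite Frobenius on power series over a perfect field -/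

theorem RingHom.finite_of_forall_eq_sum {A B : Type*} [CommRing A] [CommRing B] (f : A →+* B)
    {ι : Type*} [Fintype ι] (b : ι → B) (h : ∀ x, ∃ g : ι → A, x = ∑ i, b i * f (g i)) : f.Finite := by
  algebraize [f]
  refine Module.Finite.of_surjective (Fintype.linearCombination A b) fun x ↦ ?_
  obtain ⟨g, rfl⟩ := h x
  refine ⟨g, ?_⟩
  rw [Fintype.linearCombination_apply]
  refine Finset.sum_congr rfl fun i _ ↦ ?_
  rw [Algebra.smul_def, mul_comm]; rfl

/-- Over a perfect field the monomials with all exponents `< p` generate `K⟦X₁, …, Xₙ⟧` over its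
subring of `p`-th powers. -/
theorem frobenius_finite_mvPowerSeries (n : ℕ) (K : Type*) [Field K] (p : ℕ) [Fact p.Prime] [CharP K p]
    [PerfectRing K p] [CharP (MvPowerSeries (Fin n) K) p] :
    (frobenius (MvPowerSeries (Fin n) K) p).Finite := by
  have hp : p ≠ 0 := (Fact.out : p.Prime).ne_zero
  let e (a : Fin n → Fin p) : Fin n →₀ ℕ := Finsupp.equivFunOnFinite.symm (fun i ↦ (a i : ℕ))
  refine RingHom.finite_of_forall_eq_sum _ (fun a ↦ MvPowerSeries.monomial (e a) 1) fun f ↦ ?_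
  -- `f = ∑ a, X ^ a * (g a) ^ p`, where `(g a) ^ p` collects the exponents congruent to `a` mod `p`
  let g (a : Fin n → Fin p) : MvPowerSeries (Fin n) K :=
    fun d ↦ (frobeniusEquiv K p).symm (MvPowerSeries.coeff (p • d + e a) f)
  have hg (a : Fin n → Fin p) (d : Fin n →₀ ℕ) : MvPowerSeries.coeff d (g a) =
    (frobeniusEquiv K p).symm (MvPowerSeries.coeff (p • d + e a) f) := rfl
  refine ⟨g, ?_⟩
  ext d
  have : NeZero p := ⟨hp⟩
  let a₀ (i : Fin n) : Fin p := Fin.ofNat p (d i)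
  let q : Fin n →₀ ℕ := Finsupp.equivFunOnFinite.symm (fun i ↦ d i / p)
  have hd : d = p • q + e a₀ := by
    ext i
    simp [q, e, a₀, Nat.div_add_mod]
  rw [map_sum, Finset.sum_eq_single a₀]
  · rw [frobenius_def, ← MvPowerSeries.map_frobenius_expand p hp, MvPowerSeries.coeff_monomial_mul]
    have h1 : e a₀ ≤ d := by rw [hd]; exact le_add_self
    have h2 : d - e a₀ = p • q := by
      rw [hd]; exact add_tsub_cancel_right _ _
    rw [if_pos h1, h2, one_mul, MvPowerSeries.coeff_map, MvPowerSeries.coeff_expand_smul,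
      hg, ← hd]
    simp
  · intro a _ ha
    rw [frobenius_def, ← MvPowerSeries.map_frobenius_expand p hp, MvPowerSeries.coeff_monomial_mul]
    split_ifs with h1
    · rw [one_mul, MvPowerSeries.coeff_map]
      obtain ⟨i, hi⟩ : ∃ i, ¬ p ∣ (d - e a) i := by
        by_contra! H
        apply ha
        ext i
        obtain ⟨c, hc⟩ := H i
        have h3 := h1 i
        have h4 : d i = p * c + a i := by
          have : (d - e a) i = d i - a i := by simp [e]
          have h5 : e a i = a i := rfl
          omega
        simp [a₀, h4, Nat.mod_eq_of_lt (a i).2]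
      rw [MvPowerSeries.coeff_expand_of_not_dvd p hp _ hi, map_zero]
    · rfl
  · simp

/-! ### A Frobenius-finite extension of a complete local ring -/

/-- The map `k⟦X⟧ → K⟦X⟧` has a `k⟦X⟧`-linear retraction. It is stated for additive maps because
`MvPowerSeries` carries several module structures over `MvPowerSeries`. -/
theorem exists_retraction_mvPowerSeries (k K : Type*) [Field k] [Field K] [Algebra k K] (σ : Type*) :
    ∃ r : MvPowerSeries σ K →+ MvPowerSeries σ k,
      r 1 = 1 ∧ ∀ a f, r (MvPowerSeries.map (algebraMap k K) a * f) = a * r f := by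
  classical
  obtain ⟨φ, hφ⟩ := (Algebra.linearMap k K).exists_leftInverse_of_injective
    (LinearMap.ker_eq_bot.mpr (algebraMap k K).injective)
  have hφ1 : φ 1 = 1 := by simpa using LinearMap.congr_fun hφ 1
  let r₀ (f : MvPowerSeries σ K) : MvPowerSeries σ k := fun d ↦ φ (MvPowerSeries.coeff d f)
  have hr₀ (f d) : MvPowerSeries.coeff d (r₀ f) = φ (MvPowerSeries.coeff d f) := rfl
  refine ⟨AddMonoidHom.mk' r₀ fun f g ↦ ?_, ?_, fun a f ↦ ?_⟩
  · ext d
    simp [hr₀]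
  · ext d
    rw [AddMonoidHom.mk'_apply, hr₀, MvPowerSeries.coeff_one, MvPowerSeries.coeff_one]
    split_ifs <;> simp [hφ1]
  · ext d
    rw [AddMonoidHom.mk'_apply, hr₀, MvPowerSeries.coeff_mul,
      MvPowerSeries.coeff_mul, map_sum]
    refine Finset.sum_congr rfl fun i _ ↦ ?_
    rw [MvPowerSeries.coeff_map, hr₀, ← Algebra.smul_def, map_smul, smul_eq_mul]

/-- If `C` is a quotient of `S` and `S → S'` is a split injection of `S`-modules, where `S'` is
Noetherian with finite Frobenius, then `C ⊗[S] S'` is Noetherian with finite Frobenius and contains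
`C` as a direct summand. -/
theorem exists_pushout (C : Type u) [CommRing C] [Nontrivial C] (p : ℕ) [Fact p.Prime] [CharP C p]
    {S S' : Type u} [CommRing S] [CommRing S'] [IsNoetherianRing S'] [CharP S' p]
    (hfin : (frobenius S' p).Finite) (q : S →+* C) (hq : Function.Surjective q) (j : S →+* S')
    (r : S' →+ S) (hr : r 1 = 1) (hrj : ∀ a f, r (j a * f) = a * r f) :
    ∃ (R' : Type u) (_ : CommRing R') (_ : Algebra C R') (_ : CharP R' p),
      IsNoetherianRing R' ∧ (frobenius R' p).Finite ∧ ∃ ρ : R' →ₗ[C] C, ρ 1 = 1 := by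
  let _ : Algebra S C := q.toAlgebra
  let _ : Algebra S S' := j.toAlgebra
  let r' : S' →ₗ[S] S := { r with map_smul' := fun a f ↦ hrj a f }
  have hr' : r' 1 = 1 := hr
  let ρ : C ⊗[S] S' →ₗ[C] C :=
    (AlgebraTensorModule.rid S C C).toLinearMap ∘ₗ r'.baseChange C
  have hρ : ρ 1 = 1 := by
    rw [Algebra.TensorProduct.one_def]
    simp [ρ, hr']
  have : Nontrivial (C ⊗[S] S') := by
    refine ⟨1, 0, fun h ↦ ?_⟩
    rw [h, map_zero] at hρ
    exact zero_ne_one hρ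
  have hchar : CharP (C ⊗[S] S') p := charP_of_algebra C _ p
  let t : S' →+* C ⊗[S] S' := (Algebra.TensorProduct.includeRight : S' →ₐ[S] C ⊗[S] S').toRingHom
  have ht : Function.Surjective t := Algebra.TensorProduct.includeRight_surjective _ hq
  refine ⟨C ⊗[S] S', inferInstance, inferInstance, hchar, isNoetherianRing_of_surjective _ _ t ht, ?_, ρ, hρ⟩
  have h1 : (frobenius (C ⊗[S] S') p).comp t = t.comp (frobenius S' p) := by
    ext x
    simp [frobenius_def]
  have h2 : ((frobenius (C ⊗[S] S') p).comp t).Finite := by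
    rw [h1]
    exact (RingHom.Finite.of_surjective t ht).comp hfin
  exact RingHom.Finite.of_comp_finite h2

theorem exists_frobenius_finite_extension (C : Type u) [CommRing C] [IsLocalRing C]
    [IsAdicComplete (maximalIdeal C) C] (hfg : (maximalIdeal C).FG) (p : ℕ) [Fact p.Prime] [CharP C p] :
    ∃ (R' : Type u) (_ : CommRing R') (_ : Algebra C R') (_ : CharP R' p),
      IsNoetherianRing R' ∧ (frobenius R' p).Finite ∧ ∃ ρ : R' →ₗ[C] C, ρ 1 = 1 := by
  obtain ⟨n, q, hq⟩ := exists_surjective_mvPowerSeries C hfg p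
  let k := ResidueField C
  let K := AlgebraicClosure k
  have hk : CharP k p := charP_of_algebra C k p
  have hK : CharP K p := charP_of_injective_algebraMap (algebraMap k K).injective p
  have hS' : CharP (MvPowerSeries (Fin n) K) p :=
    charP_of_injective_ringHom MvPowerSeries.C_injective p
  obtain ⟨r, hr, hrj⟩ := exists_retraction_mvPowerSeries k K (Fin n)
  exact exists_pushout C p (frobenius_finite_mvPowerSeries n K p) q hq _ r hr hrj

/-! ### Tensoring with a finitely generated module of full support -/

/-- If `N` is finitely generated and `N_P ≠ 0`, a nonzero functional on the fibre `κ(P) ⊗ N` becomes, after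
clearing denominators, a nonzero map `N → A ⧸ P`. -/
theorem exists_linearMap_quotient_ne_zero {A : Type*} [CommRing A] {N : Type*} [AddCommGroup N]
    [Module A N] [Module.Finite A N] (P : PrimeSpectrum A) (hP : P ∈ Module.support A N) :
    ∃ (φ : N →ₗ[A] A ⧸ P.asIdeal) (n : N), φ n ≠ 0 := by
  have : Nontrivial (P.asIdeal.ResidueField ⊗[A] N) :=
    (Module.mem_support_iff_nontrivial_residueField_tensorProduct P).mp hP
  obtain ⟨x, hx⟩ := exists_ne (0 : P.asIdeal.ResidueField ⊗[A] N)
  obtain ⟨ψ, hψ⟩ : ∃ ψ : Module.Dual P.asIdeal.ResidueField (P.asIdeal.ResidueField ⊗[A] N), ψ x ≠ 0 := by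
    by_contra! h
    exact hx ((Module.forall_dual_apply_eq_zero_iff _ x).mp h)
  let ψ' : N →ₗ[A] P.asIdeal.ResidueField :=
    ψ.restrictScalars A ∘ₗ TensorProduct.mk A P.asIdeal.ResidueField N 1
  obtain ⟨n, hn⟩ : ∃ n, ψ' n ≠ 0 := by
    by_contra! h
    apply hψ
    clear hψ hx
    induction x with
    | zero => simp
    | add x y hx hy => rw [map_add, hx, hy, add_zero]
    | tmul c m =>
      have : c ⊗ₜ[A] m = c • ((1 : P.asIdeal.ResidueField) ⊗ₜ[A] m) := by
        rw [TensorProduct.smul_tmul', smul_eq_mul, mul_one]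
      rw [this, map_smul]
      have := h m
      simp only [ψ', LinearMap.comp_apply, LinearMap.restrictScalars_apply, mk_apply] at this
      rw [this, smul_zero]
  obtain ⟨s, hs⟩ := Module.Finite.fg_top (R := A) (M := N)
  obtain ⟨b, hb⟩ := IsLocalization.exist_integer_multiples (nonZeroDivisors (A ⧸ P.asIdeal)) s ψ'
  let ι : A ⧸ P.asIdeal →ₗ[A] P.asIdeal.ResidueField :=
    (Algebra.linearMap (A ⧸ P.asIdeal) P.asIdeal.ResidueField).restrictScalars A
  have hι : Function.Injective ι := IsFractionRing.injective (A ⧸ P.asIdeal) P.asIdeal.ResidueField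
  obtain ⟨c, hc⟩ := Ideal.Quotient.mk_surjective (b : A ⧸ P.asIdeal)
  have hcb (m : N) : c • ψ' m = (b : A ⧸ P.asIdeal) • ψ' m := by
    rw [← hc, ← Ideal.Quotient.algebraMap_eq, algebraMap_smul]
  have hmem (m : N) : (c • ψ') m ∈ LinearMap.range ι := by
    have : m ∈ Submodule.span A (s : Set N) := hs ▸ Submodule.mem_top
    induction this using Submodule.span_induction with
    | mem x hx =>
      obtain ⟨y, hy⟩ := hb x hx
      exact ⟨y, by rw [LinearMap.smul_apply, hcb]; exact hy⟩
    | zero => simp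
    | add x y _ _ hx hy => rw [map_add]; exact add_mem hx hy
    | smul a x _ hx => rw [map_smul]; exact Submodule.smul_mem _ _ hx
  refine ⟨(LinearEquiv.ofInjective ι hι).symm.toLinearMap ∘ₗ (c • ψ').codRestrict _ hmem, n, ?_⟩
  rw [LinearMap.comp_apply, LinearEquiv.coe_coe, ne_eq, LinearEquiv.map_eq_zero_iff]
  intro h
  have h' : c • ψ' n = 0 := congrArg Subtype.val h
  rw [hcb, Algebra.smul_def] at h'
  rcases mul_eq_zero.mp h' with h' | h'
  · exact nonZeroDivisors.ne_zero b.2 (hι (h'.trans (map_zero ι).symm))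
  · exact hn h'

/-- Over a Noetherian ring, tensoring with a finitely generated module of full support kills no
nonzero module, finitely generated or not. -/
theorem subsingleton_of_subsingleton_tensor {A : Type*} [CommRing A] [IsNoetherianRing A]
    {N M : Type*} [AddCommGroup N] [Module A N] [Module.Finite A N] [AddCommGroup M] [Module A M]
    (hN : ∀ P : PrimeSpectrum A, P ∈ Module.support A N)
    (h : Subsingleton (N ⊗[A] M)) : Subsingleton M := by
  have key : ∀ I : Ideal A, I • (⊤ : Submodule A M) = ⊤ := by
    intro I
    induction I using WellFoundedGT.induction with
    | ind I ih =>
    by_cases hI : I = ⊤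
    · simp [hI]
    by_cases hp : I.IsPrime
    · obtain ⟨φ, n, hφ⟩ := exists_linearMap_quotient_ne_zero (⟨I, hp⟩ : PrimeSpectrum A) (hN _)
      change N →ₗ[A] A ⧸ I at φ
      obtain ⟨a, ha⟩ := Ideal.Quotient.mk_surjective (φ n)
      have haI : a ∉ I := fun h ↦ hφ (by rw [← ha]; exact Ideal.Quotient.eq_zero_iff_mem.mpr h)
      -- `φ ⊗ M : N ⊗ M → M ⧸ I M` is zero, so `a M ⊆ I M`; the hypothesis for `I + (a)`
      -- then gives `I M = M`
      have hle : Ideal.span {a} • (⊤ : Submodule A M) ≤ I • ⊤ := by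
        rw [Submodule.ideal_span_singleton_smul]
        rintro _ ⟨m, -, rfl⟩
        have h0 : TensorProduct.quotTensorEquivQuotSMul M I (TensorProduct.map φ LinearMap.id (n ⊗ₜ[A] m)) = 0 := by
          rw [Subsingleton.elim (n ⊗ₜ[A] m) 0, map_zero, map_zero]
        rw [TensorProduct.map_tmul, ← ha, LinearMap.id_apply,
          TensorProduct.quotTensorEquivQuotSMul_mk_tmul] at h0
        exact (Submodule.Quotient.mk_eq_zero _).mp h0
      have h1 := ih (I ⊔ Ideal.span {a}) (by simpa using haI)
      rw [eq_top_iff]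
      refine h1.ge.trans ?_
      rw [Submodule.sup_smul]
      exact sup_le le_rfl hle
    · rw [Ideal.isPrime_iff] at hp
      push Not at hp
      -- `(I + (a)) (I + (b)) ⊆ I` with both factors strictly larger than `I`
      obtain ⟨a, b, hab, ha, hb⟩ := hp hI
      have h1 := ih (I ⊔ Ideal.span {a}) (by simpa using ha)
      have h2 := ih (I ⊔ Ideal.span {b}) (by simpa using hb)
      rw [eq_top_iff]
      calc ⊤ = ((I ⊔ Ideal.span {a}) * (I ⊔ Ideal.span {b})) • (⊤ : Submodule A M) := by
            rw [Submodule.mul_smul, h2, h1]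
        _ ≤ _ := by
          apply Submodule.smul_mono_left
          rw [Ideal.sup_mul, Ideal.mul_sup, Ideal.mul_sup, Ideal.span_singleton_mul_span_singleton]
          refine sup_le (sup_le Ideal.mul_le_left Ideal.mul_le_left) (sup_le Ideal.mul_le_right ?_)
          rwa [Ideal.span_singleton_le_iff_mem]
  have := key ⊥
  rw [Submodule.bot_smul] at this
  exact (Submodule.subsingleton_iff A).mp (subsingleton_of_bot_eq_top this)

/-- The case where `N` is a finite algebra `B` such that `A → B` has nil kernel, such as `A` over itself
via a finite Frobenius. -/
theorem subsingleton_of_subsingleton_frobenius_tensor (A : Type u) [CommRing A] [IsNoetherianRing A] (B : Type*)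
    [CommRing B] [Algebra A B]
    [Module.Finite A B] (hB : ∀ a : A, algebraMap A B a = 0 → IsNilpotent a)
    (M : Type v) [AddCommGroup M] [Module A M] (h : Subsingleton (B ⊗[A] M)) : Subsingleton M := by
  refine subsingleton_of_subsingleton_tensor (fun P ↦ ?_) h
  rw [Module.mem_support_iff_of_finite]
  intro a ha
  have : algebraMap A B a = 0 := by
    have := Module.mem_annihilator.mp ha 1
    rwa [Algebra.smul_def, mul_one] at this
  exact nilpotent_iff_mem_prime.mp (hB a this) _ P.2

/-! ### Comparison of supports -/

theorem nontrivial_tensor_of_retraction {C R' : Type*} [CommRing C] [CommRing R'] [Algebra C R']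
    (ρ : R' →ₗ[C] C) (hρ : ρ 1 = 1) (N : Type*) [AddCommGroup N] [Module C N] [Nontrivial N] :
    Nontrivial (R' ⊗[C] N) := by
  obtain ⟨x, hx⟩ := exists_ne (0 : N)
  refine ⟨1 ⊗ₜ x, 0, fun h ↦ hx ?_⟩
  have := congrArg ((TensorProduct.lid C N).toLinearMap ∘ₗ ρ.rTensor N) h
  simpa [hρ] using this

/-- A Noetherian local ring of characteristic `p` maps to a Noetherian ring with finite Frobenius such
that base change along this map kills no nonzero module. -/
theorem exists_frobenius_finite_of_isLocalRing (A : Type u) [CommRing A] [IsNoetherianRing A] [IsLocalRing A]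
    (p : ℕ) [Fact p.Prime] [CharP A p] :
    ∃ (R' : Type u) (_ : CommRing R') (_ : Algebra A R') (_ : CharP R' p),
      IsNoetherianRing R' ∧ (frobenius R' p).Finite ∧
        ∀ (N : Type (max u v)) [AddCommGroup N] [Module A N], Nontrivial N → Nontrivial (R' ⊗[A] N) := by
  let C := AdicCompletion (maximalIdeal A) A
  have : CharP C p := charP_of_algebra A C p
  obtain ⟨R', _, _, hR', hnoeth, hfin, ρ, hρ⟩ := exists_frobenius_finite_extension C
    (AdicCompletion.maximalIdeal_eq_map (R := A) ▸ (maximalIdeal A).fg_of_isNoetherianRing.map _) p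
  let _ : Algebra A R' := ((algebraMap C R').comp (algebraMap A C)).toAlgebra
  have : IsScalarTower A C R' := .of_algebraMap_eq fun _ ↦ rfl
  have : Module.Flat A C := AdicCompletion.flat_of_isNoetherian _
  have : Module.FaithfullyFlat A C := Module.FaithfullyFlat.of_flat_of_isLocalHom
  refine ⟨R', _, inferInstance, hR', hnoeth, hfin, fun N _ _ hN ↦ ?_⟩
  have h1 : Nontrivial (C ⊗[A] N) := inferInstance
  have h2 := nontrivial_tensor_of_retraction ρ hρ (C ⊗[A] N)
  exact (AlgebraTensorModule.cancelBaseChange A C C R' N).symm.toEquiv.nontrivial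

/-- If `P` is not in the support of `F(M)`, base change of `M` along a map `R → R'` inverting the
complement of `P`, with `R'` Noetherian and Frobenius-finite, is zero. -/
theorem subsingleton_of_notMem_support (R : Type u) [CommRing R] (p : ℕ) [Fact p.Prime] [CharP R p]
    (M : Type v) [AddCommGroup M] [Module R M] (P : PrimeSpectrum R)
    (hP : P ∉ Module.support R (FrobModule R p M))
    (R' : Type u) [CommRing R'] [Algebra R R'] [IsNoetherianRing R'] [CharP R' p]
    (hfin : (frobenius R' p).Finite) (hu : ∀ s ∉ P.asIdeal, IsUnit (algebraMap R R' s)) :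
    Subsingleton (R' ⊗[R] M) := by
  let B := FrobTwist R' p
  have : Module.Finite R' B := hfin
  let _ : Algebra R B := ((algebraMap R' B).comp (algebraMap R R')).toAlgebra
  have : IsScalarTower R R' B := .of_algebraMap_eq fun _ ↦ rfl
  refine subsingleton_of_subsingleton_frobenius_tensor R' B (fun a ha ↦ ⟨p, ha⟩) _ ?_
  suffices H : Subsingleton (B ⊗[R] M) from
    (AlgebraTensorModule.cancelBaseChange R R' R' B M).toEquiv.subsingleton
  -- the ring homomorphism `R^f → R'^f` induced by `R → R'`
  let φ : FrobTwist R p →ₐ[R] B :=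
    { (algebraMap R R' : R →+* R') with
      commutes' := fun r ↦ map_pow (algebraMap R R') r p }
  refine subsingleton_of_forall_eq 0 fun z ↦ ?_
  induction z with
  | zero => rfl
  | add x y hx hy => rw [hx, hy, add_zero]
  | tmul b m =>
    let e : FrobModule R p M := (1 : FrobTwist R p) ⊗ₜ[R] m
    obtain ⟨s, hs, hse⟩ := Module.notMem_support_iff'.mp hP e
    have h1 : (FrobTwist.of R p s) ⊗ₜ[R] m = 0 := by
      have : (FrobTwist.of R p s) • ((1 : FrobTwist R p) ⊗ₜ[R] m) = 0 := hse
      rwa [TensorProduct.smul_tmul', smul_eq_mul, mul_one] at this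
    have h2 := congrArg (φ.toLinearMap.rTensor M) h1
    rw [LinearMap.rTensor_tmul, map_zero] at h2
    obtain ⟨u, hu⟩ := hu s hs
    let w : B := (↑(u⁻¹) : R')
    have hw : w * φ (FrobTwist.of R p s) = 1 := by
      have : (↑(u⁻¹) : R') * algebraMap R R' s = 1 := by rw [← hu, Units.inv_mul]
      exact this
    calc b ⊗ₜ[R] m = (b * w) • (φ (FrobTwist.of R p s) ⊗ₜ[R] m) := by
          rw [TensorProduct.smul_tmul', smul_eq_mul, mul_assoc, hw, mul_one]
      _ = 0 := by
          rw [show φ (FrobTwist.of R p s) ⊗ₜ[R] m = (0 : B ⊗[R] M) from h2, smul_zero]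

/-- If `R` is a commutative Noetherian ring of prime characteristic `p`
and `M` is any `R`-module, then `Supp_R F_R(M) = Supp_R M`. -/
theorem support_frobModule (R : Type u) [CommRing R] [IsNoetherianRing R]
    (p : ℕ) [Fact p.Prime] [CharP R p] (M : Type v) [AddCommGroup M] [Module R M] :
    Module.support R (FrobModule R p M) = Module.support R M := by
  apply Set.Subset.antisymm
  · intro P hP
    contrapose! hP
    rw [Module.notMem_support_iff'] at hP ⊢
    suffices H : ∀ z : FrobTwist R p ⊗[R] M, ∃ s ∉ P.asIdeal, FrobTwist.of R p s • z = 0 from H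
    intro z
    induction z with
    | zero => exact ⟨1, P.asIdeal.primeCompl.one_mem, smul_zero _⟩
    | tmul b m =>
      obtain ⟨s, hs, hsm⟩ := hP m
      refine ⟨s ^ p, P.asIdeal.primeCompl.pow_mem hs p, ?_⟩
      calc FrobTwist.of R p (s ^ p) • (b ⊗ₜ[R] m) = (s • b) ⊗ₜ[R] m := rfl
        _ = 0 := by rw [TensorProduct.smul_tmul, hsm, TensorProduct.tmul_zero]
    | add x y hx hy =>
      obtain ⟨s, hs, hsx⟩ := hx
      obtain ⟨t, ht, hty⟩ := hy
      refine ⟨s * t, P.asIdeal.primeCompl.mul_mem hs ht, ?_⟩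
      have h1 : FrobTwist.of R p (s * t) = FrobTwist.of R p s * FrobTwist.of R p t := rfl
      rw [smul_add, h1, mul_smul, mul_smul, hty, smul_zero, add_zero, smul_comm, hsx, smul_zero]
  · intro P hP
    by_contra hPF
    let A := Localization.AtPrime P.asIdeal
    have : CharP A p := charP_of_algebra R A p
    obtain ⟨R', _, _, _, _, hfin, hN⟩ := exists_frobenius_finite_of_isLocalRing.{u, v} A p
    let _ : Algebra R R' := ((algebraMap A R').comp (algebraMap R A)).toAlgebra
    have : IsScalarTower R A R' := .of_algebraMap_eq fun _ ↦ rfl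
    have h0 := subsingleton_of_notMem_support R p M P hPF R' hfin fun s hs ↦
      (IsLocalization.map_units A (⟨s, hs⟩ : P.asIdeal.primeCompl)).map (algebraMap A R')
    have h1 : Nontrivial (A ⊗[R] M) := by
      have := Module.mem_support_iff.mp hP
      exact (LocalizedModule.equivTensorProduct P.asIdeal.primeCompl M).symm.toEquiv.nontrivial
    have h2 : Nontrivial (R' ⊗[A] (A ⊗[R] M)) := hN _ h1
    have h3 : Nontrivial (R' ⊗[R] M) :=
      (AlgebraTensorModule.cancelBaseChange R A A R' M).symm.toEquiv.nontrivial
    exact not_subsingleton _ h0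
end

section
/- Let (R,m) be a Noetherian local ring of prime characteristic p and M a finitely generated R-module of dimension s. Then F_R(H^s_m(M)) ≅ H^s_m(F_R(M)), where H^s_m denotes the s-th local cohomology module with support in m. -/
open TensorProduct IsLocalRing

universe u v

/-!
For `M` of dimension `s`, choose a system of parameters `x_1, …, x_s` of `R ⧸ Ann M` and lift it
to `m`. The top local cohomology module is then an iterated cokernel of localizations,
`H^s_m(M) = H^1_{(x_s)}(⋯ H^1_{(x_1)}(M))` with `H^1_{(x)}(N) = N_x ⧸ im(N → N_x)`, and the same
formula holds for `F(M)`, because every `a ∈ Ann M` satisfies `a ^ p ∈ Ann F(M)`, so that the same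
elements are parameters for `F(M)`. The functor `F` is right exact and commutes with inverting `x`
(inverting `x` is inverting `x ^ p`), so it commutes with each step `N ↦ N_x ⧸ im(N → N_x)`.

The formula for the top local cohomology (`van_and_limExt_equiv`) is proved without Čech complexes,
by induction on the number of elements. The kernel `T` of `N → N_x` and the cokernel
`N_x ⧸ im(N → N_x)` require one element less, and all local cohomology of `N_x` vanishes since
`x ∈ m` acts invertibly on it. The long exact sequences of `0 → T → N → im → 0` and
`0 → im → N_x → N_x ⧸ im → 0` then give `H^{s+1}(N) = H^{s+1}(im) = H^s(N_x ⧸ im)`. The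
induction starts with `m`-power torsion modules: these have no higher local cohomology
(`PowTors.van_succ`), because they embed in injective `m`-power torsion modules, which is a
consequence of the Artin–Rees lemma (`injective_powTorsSub`).

Long exact sequences are available in Mathlib for the `Ext` groups `CategoryTheory.Abelian.Ext`,
whereas local cohomology is defined through derived functors of `Hom(-, Y)`. The two are compared
in `extEquiv`, naturally in the first variable (`extEquiv_naturality`), so both have the same direct
limit (`nonempty_localCohomology_equiv`).
-/

namespace FrobLC

open CategoryTheory Opposite Limits

/-! ### Comparison of the two constructions of `Ext` -/

section Comparison

variable {R : Type u} [CommRing R] {X X' : ModuleCat.{u} R} (Y : ModuleCat.{u} R)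

/-- The contravariant functor `Hom(-, Y)`, as a functor to the opposite category. -/
noncomputable abbrev homOp (Y : ModuleCat.{u} R) : ModuleCat.{u} R ⥤ (ModuleCat.{u} R)ᵒᵖ :=
  ((linearYoneda R (ModuleCat.{u} R)).obj Y).rightOp

/-- The complex `Hom(P, Y)`, living in the opposite category so that Mathlib's `Ext` is its
homology. -/
noncomputable abbrev homCx (P : ProjectiveResolution X) (Y : ModuleCat.{u} R) :
    ChainComplex (ModuleCat.{u} R)ᵒᵖ ℕ :=
  ((homOp Y).mapHomologicalComplex _).obj P.complex

/-- The module of `n`-cocycles of `Hom(P, Y)`; passing to the opposite category turns cycles into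
opcycles. -/
noncomputable abbrev cocyc (P : ProjectiveResolution X) (Y : ModuleCat.{u} R) (n : ℕ) :
    ModuleCat.{u} R := ((homCx P Y).opcycles n).unop

/-- The inclusion of the `n`-cocycles into `Hom(P_n, Y)`. -/
noncomputable def cocycIncl (P : ProjectiveResolution X) (Y : ModuleCat.{u} R) (n : ℕ) :
    cocyc P Y n →ₗ[R] (P.complex.X n ⟶ Y) :=
  ((homCx P Y).pOpcycles n).unop.hom

/-- `Ext^n(X, Y)`, defined by derived functors, is the cohomology of `Hom(P, Y)`. -/
noncomputable def isoH (P : ProjectiveResolution X) (Y : ModuleCat.{u} R) (n : ℕ) :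
    ((homOp Y).leftDerived n).obj X ≅ (homCx P Y).homology n :=
  P.isoLeftDerivedObj (homOp Y) n

/-- The class in the derived functor `Ext` of a cocycle. -/
noncomputable def cocycToExt (P : ProjectiveResolution X) (Y : ModuleCat.{u} R) (n : ℕ) :
    cocyc P Y n →ₗ[R] (((Ext R (ModuleCat.{u} R) n).obj (op X)).obj Y) :=
  ((isoH P Y n).hom ≫ (homCx P Y).homologyι n).unop.hom

lemma cocycIncl_injective (P : ProjectiveResolution X) (n : ℕ) :
    Function.Injective (cocycIncl P Y n) := by
  exact (ModuleCat.mono_iff_injective ((homCx P Y).pOpcycles n).unop).1 inferInstance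

lemma cocycToExt_surjective (P : ProjectiveResolution X) (n : ℕ) :
    Function.Surjective (cocycToExt P Y n) := by
  exact (ModuleCat.epi_iff_surjective
    ((isoH P Y n).hom ≫ (homCx P Y).homologyι n).unop).1 inferInstance

lemma d_comp_cocycIncl (P : ProjectiveResolution X) (n m : ℕ) (z : cocyc P Y n) :
    P.complex.d m n ≫ cocycIncl P Y n z = 0 := by
  have := (homCx P Y).d_pOpcycles m n
  have h2 := congr($(congrArg Quiver.Hom.unop this).hom z)
  exact h2

/-- A map `P_n ⟶ Y` killed by the differential comes from a cocycle. -/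
lemma exists_cocycIncl (P : ProjectiveResolution X) (n : ℕ) (f : P.complex.X n ⟶ Y)
    (hf : P.complex.d (n + 1) n ≫ f = 0) : ∃ z, cocycIncl P Y n z = f := by
  have hS := ShortComplex.exact_of_g_is_cokernel
    (ShortComplex.mk _ _ ((homCx P Y).d_pOpcycles (n + 1) n))
    ((homCx P Y).opcyclesIsCokernel (n + 1) n (by simp))
  exact (ShortComplex.moduleCat_exact_iff _).1 hS.unop f hf

/-- There are no nonzero coboundaries in degree `0`. -/
lemma extMk_zero_iff (P : ProjectiveResolution X) (f : P.complex.X 0 ⟶ Y)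
    (hf : P.complex.d 1 0 ≫ f = 0) : P.extMk f 1 rfl hf = 0 ↔ f = 0 := by
  constructor
  · intro h
    rw [← P.extEquivCohomologyClass.apply_eq_iff_eq,
      P.extEquivCohomologyClass_extMk, P.extEquivCohomologyClass_zero,
      CochainComplex.HomComplex.CohomologyClass.mk_eq_zero_iff,
      CochainComplex.HomComplex.Cocycle.toSingleMk_mem_coboundaries_iff _ _ _ _ _ 1 (by simp)] at h
    obtain ⟨g, hg⟩ := h
    have h0 : P.cochainComplex.d (-(0 : ℕ) : ℤ) 1 = 0 := by
      apply IsZero.eq_of_tgt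
      exact CochainComplex.isZero_of_isStrictlyLE _ 0 _ (by simp)
    rw [h0, zero_comp] at hg
    rw [← cancel_epi (P.cochainComplexXIso (-(0 : ℕ)) 0 rfl).hom, ← hg, comp_zero]
  · rintro rfl
    simp

/-- A cocycle has zero class in one version of `Ext` exactly when it does in the other: in both
cases this says that it is a coboundary. -/
lemma cocycToExt_eq_zero_iff (P : ProjectiveResolution X) (n : ℕ) (z : cocyc P Y n) :
    cocycToExt P Y n z = 0 ↔
      P.extMk (cocycIncl P Y n z) (n + 1) rfl (d_comp_cocycIncl Y P n _ z) = 0 := by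
  have e : cocycToExt P Y n z = 0 ↔ ((homCx P Y).homologyι n).unop z = 0 := by
    have h2 := (ModuleCat.mono_iff_injective (isoH P Y n).hom.unop).1
      inferInstance
    exact map_eq_zero_iff (isoH P Y n).hom.unop.hom h2
  rw [e]
  match n with
  | 0 =>
    rw [extMk_zero_iff, map_eq_zero_iff _ (cocycIncl_injective Y P 0)]
    have h2 := (ModuleCat.mono_iff_injective ((homCx P Y).homologyι 0).unop).1
      inferInstance
    exact map_eq_zero_iff ((homCx P Y).homologyι 0).unop.hom h2
  | n + 1 =>
    rw [P.extMk_eq_zero_iff _ _ _ _ n rfl]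
    have hS := ShortComplex.exact_of_f_is_kernel
      (ShortComplex.mk _ _ ((homCx P Y).homologyι_comp_fromOpcycles (n + 1) n))
      ((homCx P Y).homologyIsKernel (n + 1) n (by simp))
    have h3 := (ShortComplex.moduleCat_exact_iff _).1 hS.unop
    have key : ∀ g : P.complex.X n ⟶ Y,
        cocycIncl P Y (n + 1) (((homCx P Y).fromOpcycles (n + 1) n).unop.hom g) =
          P.complex.d (n + 1) n ≫ g := fun g =>
      congr($(congrArg Quiver.Hom.unop ((homCx P Y).p_fromOpcycles (n + 1) n)).hom g)
    constructor
    · intro h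
      obtain ⟨g, hg⟩ := h3 z h
      exact ⟨g, (key g).symm.trans (congrArg _ hg)⟩
    · rintro ⟨g, hg⟩
      rw [← key] at hg
      rw [← cocycIncl_injective Y P _ hg]
      exact congr($(congrArg Quiver.Hom.unop
        ((homCx P Y).homologyι_comp_fromOpcycles (n + 1) n)).hom g)

/-- The class in Yoneda's `Ext` of a cocycle. -/
noncomputable def cocycToExt' (P : ProjectiveResolution X) (Y : ModuleCat.{u} R) (n : ℕ) :
    cocyc P Y n →ₗ[R] Abelian.Ext X Y n where
  toFun z := P.extMk (cocycIncl P Y n z) (n + 1) rfl (d_comp_cocycIncl Y P n _ z)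
  map_add' z w := by
    rw [P.add_extMk]
    simp
  map_smul' r z := by
    rw [RingHom.id_apply, Abelian.Ext.smul_eq_comp_mk₀, P.extMk_comp_mk₀]
    simp

lemma cocycToExt'_surjective (P : ProjectiveResolution X) (n : ℕ) :
    Function.Surjective (cocycToExt' P Y n) := by
  intro α
  obtain ⟨f, hf, rfl⟩ := P.extMk_surjective α (n + 1) rfl
  obtain ⟨z, rfl⟩ := exists_cocycIncl Y P n f hf
  exact ⟨z, rfl⟩

/-- The two versions of `Ext` in Mathlib, by derived functors of `Hom(-, Y)` and by morphisms in the
derived category, agree: both are quotients of the cocycles of `Hom(P, Y)` by the same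
submodule. -/
noncomputable def extEquiv (P : ProjectiveResolution X) (Y : ModuleCat.{u} R) (n : ℕ) :
    (((Ext R (ModuleCat.{u} R) n).obj (op X)).obj Y) ≃ₗ[R] Abelian.Ext X Y n :=
  ((cocycToExt P Y n).quotKerEquivOfSurjective (cocycToExt_surjective Y P n)).symm ≪≫ₗ
    Submodule.quotEquivOfEq _ _ (by
      ext z
      exact cocycToExt_eq_zero_iff Y P n z) ≪≫ₗ
    ((cocycToExt' P Y n).quotKerEquivOfSurjective (cocycToExt'_surjective Y P n))

lemma extEquiv_cocycToExt (P : ProjectiveResolution X) (n : ℕ) (z : cocyc P Y n) :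
    extEquiv P Y n (cocycToExt P Y n z) = cocycToExt' P Y n z := by
  have : ((cocycToExt P Y n).quotKerEquivOfSurjective (cocycToExt_surjective Y P n)).symm
      (cocycToExt P Y n z) = Submodule.Quotient.mk z := by
    rw [LinearEquiv.symm_apply_eq]
    rfl
  simp only [extEquiv, LinearEquiv.trans_apply, this]
  rfl

/-- The comparison of the two versions of `Ext` is natural in the first variable. -/
lemma extEquiv_naturality (P : ProjectiveResolution X) (P' : ProjectiveResolution X')
    (g : X' ⟶ X) (n : ℕ) (h : ((Ext R (ModuleCat.{u} R) n).obj (op X)).obj Y) :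
    extEquiv P' Y n ((((Ext R (ModuleCat.{u} R) n).map g.op).app Y).hom h) =
      (Abelian.Ext.mk₀ g).comp (extEquiv P Y n h) (zero_add _) := by
  obtain ⟨z, rfl⟩ := cocycToExt_surjective Y P n h
  let φ := ProjectiveResolution.lift g P' P
  let ψ : homCx P' Y ⟶ homCx P Y := ((homOp Y).mapHomologicalComplex _).map φ
  let z' : cocyc P' Y n := (HomologicalComplex.opcyclesMap ψ n).unop.hom z
  have h1 : cocycIncl P' Y n z' = φ.f n ≫ cocycIncl P Y n z :=
    congr($(congrArg Quiver.Hom.unop (HomologicalComplex.p_opcyclesMap ψ n)).hom z)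
  have h2 : (((Ext R (ModuleCat.{u} R) n).map g.op).app Y).hom (cocycToExt P Y n z) =
      cocycToExt P' Y n z' := by
    have e1 : ((homOp Y).leftDerived n).map g ≫ (isoH P Y n).hom =
        (isoH P' Y n).hom ≫ HomologicalComplex.homologyMap ψ n :=
      ProjectiveResolution.isoLeftDerivedObj_hom_naturality g P' P φ
        (ProjectiveResolution.lift_commutes_zero _ _ _) (homOp Y) n
    have e2 : ((homOp Y).leftDerived n).map g ≫ (isoH P Y n).hom ≫
        (homCx P Y).homologyι n = ((isoH P' Y n).hom ≫
        (homCx P' Y).homologyι n) ≫ HomologicalComplex.opcyclesMap ψ n := by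
      rw [reassoc_of% e1, Category.assoc]
      congr 1
      exact HomologicalComplex.homologyι_naturality ψ n
    exact congr($(congrArg Quiver.Hom.unop e2).hom z)
  rw [h2, extEquiv_cocycToExt, extEquiv_cocycToExt]
  let φ' : ProjectiveResolution.Hom P' P g :=
    ⟨φ, by simpa using ProjectiveResolution.lift_commutes_zero g P' P⟩
  refine Eq.trans ?_ (ProjectiveResolution.mk₀_comp_extMk (cocycIncl P Y n z) (n + 1) rfl
    (d_comp_cocycIncl Y P n _ z) φ').symm
  simp only [cocycToExt', LinearMap.coe_mk, AddHom.coe_mk, h1]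
  rfl

end Comparison

open Abelian

/-! ### Long exact sequences for direct limits of `Ext` -/

section LocalCohomologySystem

variable {R : Type u} [CommRing R] (I : Ideal R)

/-- The quotient `R ⧸ I ^ t` as an object of `ModuleCat R`. -/
noncomputable abbrev powQuot (t : ℕ) : ModuleCat.{u} R := ModuleCat.of R (R ⧸ I ^ t)

/-- The canonical projection `R ⧸ I ^ t' ⟶ R ⧸ I ^ t` for `t ≤ t'`. -/
noncomputable def powProj {t t' : ℕ} (h : t ≤ t') : powQuot I t' ⟶ powQuot I t :=
  ModuleCat.ofHom (Submodule.mapQ _ _ LinearMap.id (Ideal.pow_le_pow_right h))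

lemma powProj_refl (t : ℕ) : powProj I (le_refl t) = 𝟙 _ := by
  ext
  rfl

lemma powProj_comp {t t' t'' : ℕ} (h : t ≤ t') (h' : t' ≤ t'') :
    powProj I h' ≫ powProj I h = powProj I (h.trans h') := by
  ext
  rfl

/-- The transition map `Ext^i(R ⧸ I ^ t, N) → Ext^i(R ⧸ I ^ t', N)` for `t ≤ t'`. -/
noncomputable def extRes (N : ModuleCat.{u} R) (i : ℕ) (t t' : ℕ) (h : t ≤ t') :
    Ext (powQuot I t) N i →ₗ[R] Ext (powQuot I t') N i :=
  (Ext.mk₀ (powProj I h)).precompOfLinear R N (zero_add i)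

lemma extRes_apply (N : ModuleCat.{u} R) {i t t' : ℕ} (h : t ≤ t') (e : Ext (powQuot I t) N i) :
    extRes I N i t t' h e = (Ext.mk₀ (powProj I h)).comp e (zero_add i) := rfl

lemma extRes_trans (N : ModuleCat.{u} R) {i t t' t'' : ℕ} (h : t ≤ t') (h' : t' ≤ t'')
    (e : Ext (powQuot I t) N i) :
    extRes I N i t' t'' h' (extRes I N i t t' h e) = extRes I N i t t'' (h.trans h') e := by
  simp only [extRes_apply]
  rw [← powProj_comp I h h', Ext.mk₀_comp_mk₀_assoc]

instance (N : ModuleCat.{u} R) (i : ℕ) :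
    DirectedSystem (fun t => Ext (powQuot I t) N i) (extRes I N i · · ·) where
  map_self {t} e := by
    rw [extRes_apply, powProj_refl, Ext.mk₀_id_comp]
  map_map {t t' t''} h h' e := extRes_trans I N h h' e

/-- Postcomposition with a Yoneda class commutes with the transition maps. -/
lemma extRes_comp {N N' : ModuleCat.{u} R} {i j k t t' : ℕ} (h : t ≤ t')
    (e : Ext (powQuot I t) N i) (β : Ext N N' j) (hk : i + j = k) :
    (extRes I N i t t' h e).comp β hk = extRes I N' k t t' h (e.comp β hk) := by
  rw [extRes_apply, extRes_apply, Ext.comp_assoc]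
  omega

/-- The `i`-th local cohomology module of `N` with support in `I`, as the direct limit of the
modules `Ext^i(R ⧸ I ^ t, N)`. -/
abbrev limExt (i : ℕ) (N : ModuleCat.{u} R) : Type u :=
  Module.DirectLimit (fun t => Ext (powQuot I t) N i) (extRes I N i)

/-- A family of maps between the systems `Ext^i(R ⧸ I ^ t, N)` and `Ext^j(R ⧸ I ^ t, N')` which is
injective and surjective up to enlarging `t` induces an isomorphism of direct limits. -/
lemma nonempty_limExt_equiv {N N' : ModuleCat.{u} R} {i j k : ℕ} (β : Ext N N' j) (hk : i + j = k)
    (inj : ∀ t (e : Ext (powQuot I t) N i), e.comp β hk = 0 →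
      ∃ t', ∃ h : t ≤ t', extRes I N i t t' h e = 0)
    (surj : ∀ t (e : Ext (powQuot I t) N' k), ∃ t', ∃ h : t ≤ t',
      ∃ e' : Ext (powQuot I t') N i, e'.comp β hk = extRes I N' k t t' h e) :
    Nonempty (limExt I i N ≃ₗ[R] limExt I k N') := by
  let φ : limExt I i N →ₗ[R] limExt I k N' :=
    Module.DirectLimit.map (fun t => β.postcompOfLinear R (powQuot I t) hk) (by
      intro t t' h
      ext e
      exact extRes_comp I h e β hk)
  have hφ : ∀ t (e : Ext (powQuot I t) N i), φ (Module.DirectLimit.of R ℕ _ _ t e) =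
      Module.DirectLimit.of R ℕ _ (extRes I N' k) t (e.comp β hk) := fun t e => by
    simp only [φ, Module.DirectLimit.map_apply_of]; rfl
  refine ⟨LinearEquiv.ofBijective φ ⟨?_, ?_⟩⟩
  · rw [injective_iff_map_eq_zero]
    intro z hz
    obtain ⟨t, e, rfl⟩ := Module.DirectLimit.exists_of z
    rw [hφ] at hz
    obtain ⟨t', h, he⟩ := Module.DirectLimit.of.zero_exact hz
    rw [← extRes_comp] at he
    obtain ⟨t'', h', he'⟩ := inj _ _ he
    rw [← Module.DirectLimit.of_f (hij := h), ← Module.DirectLimit.of_f (hij := h'), he', map_zero]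
  · intro z
    obtain ⟨t, e, rfl⟩ := Module.DirectLimit.exists_of z
    obtain ⟨t', h, e', he⟩ := surj t e
    exact ⟨Module.DirectLimit.of _ _ _ _ t' e', by
      rw [hφ, he, Module.DirectLimit.of_f]⟩

/-- The direct system `Ext^i(R ⧸ I ^ t, N)` is essentially zero from every stage on, so that
`H^i_I(N) = 0`. -/
def Van (i : ℕ) (N : ModuleCat.{u} R) : Prop :=
  ∀ t (e : Ext (powQuot I t) N i), ∃ t', ∃ h : t ≤ t', extRes I N i t t' h e = 0

variable {I} {S : ShortComplex (ModuleCat.{u} R)} (hS : S.ShortExact)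

include hS

lemma Van.middle {i : ℕ} (h₁ : Van I i S.X₁) (h₃ : Van I i S.X₃) : Van I i S.X₂ := by
  intro t e
  obtain ⟨t', h, he⟩ := h₃ t (e.comp (Ext.mk₀ S.g) (add_zero i))
  rw [← extRes_comp] at he
  obtain ⟨e₁, he₁⟩ := Ext.covariant_sequence_exact₂ _ hS _ he
  obtain ⟨t'', h', he'⟩ := h₁ t' e₁
  refine ⟨t'', h.trans h', ?_⟩
  rw [← extRes_trans I _ h h', ← he₁, ← extRes_comp, he', Ext.zero_comp]

lemma Van.left {i : ℕ} (h₃ : Van I i S.X₃) (h₂ : Van I (i + 1) S.X₂) : Van I (i + 1) S.X₁ := by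
  intro t e
  obtain ⟨t', h, he⟩ := h₂ t (e.comp (Ext.mk₀ S.f) (add_zero _))
  rw [← extRes_comp] at he
  obtain ⟨e₁, he₁⟩ := Ext.covariant_sequence_exact₁ _ hS _ he rfl
  obtain ⟨t'', h', he'⟩ := h₃ t' e₁
  refine ⟨t'', h.trans h', ?_⟩
  rw [← extRes_trans I _ h h', ← he₁, ← extRes_comp, he', Ext.zero_comp]

/-- If `H^i_I` and `H^{i+1}_I` of the left term vanish, the right map induces an isomorphism. -/
lemma nonempty_limExt_equiv_right {i : ℕ} (h₁ : Van I i S.X₁) (h₁' : Van I (i + 1) S.X₁) :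
    Nonempty (limExt I i S.X₂ ≃ₗ[R] limExt I i S.X₃) := by
  refine nonempty_limExt_equiv I (Ext.mk₀ S.g) (add_zero i) ?_ ?_
  · intro t e he
    obtain ⟨e₁, he₁⟩ := Ext.covariant_sequence_exact₂ _ hS _ he
    obtain ⟨t', h, he'⟩ := h₁ t e₁
    exact ⟨t', h, by rw [← he₁, ← extRes_comp, he', Ext.zero_comp]⟩
  · intro t e
    obtain ⟨t', h, he⟩ := h₁' t (e.comp hS.extClass rfl)
    rw [← extRes_comp] at he
    exact ⟨t', h, Ext.covariant_sequence_exact₃ _ hS _ rfl he⟩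

/-- If `H^i_I` and `H^{i+1}_I` of the middle term vanish, the connecting map is an isomorphism. -/
lemma nonempty_limExt_equiv_connecting {i : ℕ} (h₂ : Van I i S.X₂) (h₂' : Van I (i + 1) S.X₂) :
    Nonempty (limExt I i S.X₃ ≃ₗ[R] limExt I (i + 1) S.X₁) := by
  refine nonempty_limExt_equiv I hS.extClass rfl ?_ ?_
  · intro t e he
    obtain ⟨e₁, he₁⟩ := Ext.covariant_sequence_exact₃ _ hS _ rfl he
    obtain ⟨t', h, he'⟩ := h₂ t e₁
    exact ⟨t', h, by rw [← he₁, ← extRes_comp, he', Ext.zero_comp]⟩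
  · intro t e
    obtain ⟨t', h, he⟩ := h₂' t (e.comp (Ext.mk₀ S.f) (add_zero _))
    rw [← extRes_comp] at he
    exact ⟨t', h, Ext.covariant_sequence_exact₁ _ hS _ he rfl⟩

end LocalCohomologySystem

/-! ### Comparison with Mathlib's local cohomology -/

section Colimit

variable {R : Type u} [CommRing R] (I : Ideal R)

/-- Mathlib's local cohomology module is the direct limit of `Ext^i(R ⧸ I ^ t, N)` formed with
Yoneda's `Ext`. -/
lemma nonempty_localCohomology_equiv (i : ℕ) (N : ModuleCat.{u} R) :
    Nonempty ((localCohomology I i).obj N ≃ₗ[R] limExt I i N) := by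
  let D := localCohomology.diagram (localCohomology.idealPowersDiagram I) i
  let E := colimit.cocone D
  have hE : IsColimit (((evaluation _ _).obj N).mapCocone E) :=
    isColimitOfPreserves _ (colimit.isColimit D)
  let P : ∀ t, ProjectiveResolution (powQuot I t) := fun t => projectiveResolution _
  -- the isomorphisms with Yoneda's `Ext`, stage by stage
  let ε : ∀ t : ℕ, ((D.obj (op (op t))).obj N) ≃ₗ[R] Ext (powQuot I t) N i :=
    fun t => extEquiv (P t) N i
  have hε : ∀ (t t' : ℕ) (h : t ≤ t') (e : (D.obj (op (op t))).obj N),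
      ε t' (((D.map (homOfLE h).op.op).app N).hom e) = extRes I N i t t' h (ε t e) :=
    fun t t' h e => extEquiv_naturality N (P t) (P t') (powProj I h) i e
  let ι : ∀ t : ℕ, (D.obj (op (op t))).obj N →ₗ[R] (localCohomology I i).obj N :=
    fun t => ((E.ι.app (op (op t))).app N).hom
  have hι : ∀ (t t' : ℕ) (h : t ≤ t') (e : (D.obj (op (op t))).obj N),
      ι t' (((D.map (homOfLE h).op.op).app N).hom e) = ι t e := fun t t' h e =>
    congr(($(E.w (homOfLE h).op.op).app N).hom e)
  let c : Cocone (D ⋙ (evaluation _ _).obj N) :=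
    { pt := ModuleCat.of R (limExt I i N)
      ι :=
        { app := fun t => ModuleCat.ofHom
            (Module.DirectLimit.of R ℕ _ (extRes I N i) t.unop.unop ∘ₗ (ε t.unop.unop).toLinearMap)
          naturality := by
            intro t t' h
            ext e
            change Module.DirectLimit.of R ℕ _ (extRes I N i) t'.unop.unop
              (ε t'.unop.unop (((D.map h).app N).hom e)) =
              Module.DirectLimit.of R ℕ _ (extRes I N i) t.unop.unop (ε t.unop.unop e)
            refine (congrArg _ (hε _ _ h.unop.unop.le e)).trans ?_
            rw [Module.DirectLimit.of_f] } }
  let φ : (localCohomology I i).obj N →ₗ[R] limExt I i N := (hE.desc c).hom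
  have hφ : ∀ t e, φ (ι t e) = Module.DirectLimit.of R ℕ _ (extRes I N i) t (ε t e) := fun t e =>
    congr(($(hE.fac c (op (op t)))).hom e)
  let ψ : limExt I i N →ₗ[R] (localCohomology I i).obj N :=
    Module.DirectLimit.lift R ℕ _ _ (fun t => ι t ∘ₗ (ε t).symm.toLinearMap) (by
      intro t t' h e
      obtain ⟨e, rfl⟩ := (ε t).surjective e
      rw [← hε]
      simp [hι])
  have hψ : ∀ t e, ψ (Module.DirectLimit.of R ℕ _ (extRes I N i) t e) = ι t ((ε t).symm e) :=
    fun t e => by simp [ψ]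
  refine ⟨LinearEquiv.ofLinearMap φ ψ ?_ ?_⟩
  · apply Module.DirectLimit.hom_ext
    intro t
    ext e
    simp [hψ, hφ]
  · have h : ModuleCat.ofHom (ψ ∘ₗ φ) = 𝟙 ((localCohomology I i).obj N) := by
      refine hE.hom_ext fun t => ?_
      ext e
      change ψ (φ (ι t.unop.unop e)) = ι t.unop.unop e
      rw [hφ, hψ, LinearEquiv.symm_apply_apply]
    exact congr(($h).hom)

end Colimit

/-! ### Torsion modules -/

section Torsion

variable {R : Type u} [CommRing R] {I : Ideal R}

/-- If some `x ∈ I` acts invertibly on `N` then `Ext^i(R ⧸ I ^ t, N) = 0`, because `x ^ t` acts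
both invertibly and as zero. -/
lemma van_of_bijective {N : ModuleCat.{u} R} {x : R} (hx : x ∈ I)
    (hN : Function.Bijective (fun n : N => x • n)) (i : ℕ) : Van I i N := by
  intro t e
  refine ⟨t, le_rfl, ?_⟩
  suffices h : e = 0 by rw [h, map_zero]
  have h1 : x ^ t • e = 0 := by
    have h0 : (x ^ t • 𝟙 (powQuot I t) : powQuot I t ⟶ powQuot I t) = 0 := by
      ext
      change (Submodule.Quotient.mk (x ^ t • (1 : R)) : R ⧸ I ^ t) = 0
      rw [Submodule.Quotient.mk_eq_zero]
      simpa using Ideal.pow_mem_pow hx t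
    rw [← Ext.mk₀_id_comp e, ← Ext.smul_comp, ← Ext.mk₀_smul, h0, Ext.mk₀_zero, Ext.zero_comp]
  have : IsIso (x ^ t • 𝟙 N : N ⟶ N) := by
    rw [ConcreteCategory.isIso_iff_bijective]
    have : ⇑(ConcreteCategory.hom (x ^ t • 𝟙 N : N ⟶ N)) = (fun n : N => x • n)^[t] := by
      rw [smul_iterate]
      rfl
    rw [this]
    exact hN.iterate t
  rw [Ext.smul_eq_comp_mk₀] at h1
  have h2 := congrArg (fun e' => e'.comp (Ext.mk₀ (inv (x ^ t • 𝟙 N))) (add_zero i)) h1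
  simpa using h2

/-- Every element of `N` is killed by a power of `I`. -/
def PowTors (I : Ideal R) (N : Type*) [AddCommGroup N] [Module R N] : Prop :=
  ∀ n : N, ∃ k : ℕ, ∀ a ∈ I ^ k, a • n = 0

/-- The submodule `Γ_I(N)` of elements killed by a power of `I`. -/
def powTorsSub (I : Ideal R) (N : Type*) [AddCommGroup N] [Module R N] : Submodule R N where
  carrier := {n | ∃ k : ℕ, ∀ a ∈ I ^ k, a • n = 0}
  zero_mem' := ⟨0, fun a _ => smul_zero a⟩
  add_mem' := by
    rintro n n' ⟨k, hk⟩ ⟨k', hk'⟩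
    refine ⟨max k k', fun a ha => ?_⟩
    rw [smul_add, hk a (Ideal.pow_le_pow_right (le_max_left _ _) ha),
      hk' a (Ideal.pow_le_pow_right (le_max_right _ _) ha), add_zero]
  smul_mem' := by
    rintro c n ⟨k, hk⟩
    exact ⟨k, fun a ha => by rw [smul_comm, hk a ha, smul_zero]⟩

lemma powTors_powTorsSub (N : Type*) [AddCommGroup N] [Module R N] :
    PowTors I (powTorsSub I N) := by
  rintro ⟨n, k, hk⟩
  exact ⟨k, fun a ha => Subtype.ext (hk a ha)⟩

/-- A finitely generated submodule of an `I`-power torsion module is killed by one power of `I`. -/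
lemma PowTors.exists_of_finite {N P : Type*} [AddCommGroup N] [Module R N] [AddCommGroup P]
    [Module R P] [Module.Finite R P] (hN : PowTors I N) (g : P →ₗ[R] N) :
    ∃ k : ℕ, ∀ a ∈ I ^ k, ∀ z, a • g z = 0 := by
  obtain ⟨s, hs⟩ := Module.Finite.fg_top (R := R) (M := P)
  choose k hk using fun z => hN (g z)
  refine ⟨s.sup k, fun a ha z => ?_⟩
  have hz : z ∈ Submodule.span R (s : Set P) := by rw [hs]; trivial
  induction hz using Submodule.span_induction with
  | mem z hz => exact hk z a (Ideal.pow_le_pow_right (Finset.le_sup hz) ha)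
  | zero => simp
  | add y z _ _ hy hz => rw [map_add, smul_add, hy, hz, add_zero]
  | smul c z _ hz => rw [map_smul, smul_comm, hz, smul_zero]

/-- Over a Noetherian ring `Γ_I` preserves injectivity: by Artin-Rees, a homomorphism from an ideal
`A` to `Γ_I(E)` factors through `A ⧸ (A ∩ I ^ n) ⊆ R ⧸ I ^ n`. -/
lemma injective_powTorsSub [IsNoetherianRing R] (E : Type u) [AddCommGroup E] [Module R E]
    [hE : Module.Injective R E] : Module.Injective R (powTorsSub I E) := by
  refine Module.Baer.injective fun A g => ?_
  obtain ⟨k, hk⟩ := (powTors_powTorsSub (I := I) E).exists_of_finite g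
  obtain ⟨c, hc⟩ := Ideal.exists_pow_inf_eq_pow_smul I (A : Submodule R R)
  have hc' := hc (c + k) (Nat.le_add_right _ _)
  let K : Submodule R A := Submodule.comap (Submodule.subtype A) (I ^ (c + k))
  have hK : K ≤ LinearMap.ker ((powTorsSub I E).subtype ∘ₗ g) := by
    intro a ha
    have h1 : (a : R) ∈ I ^ k • A := by
      have : (a : R) ∈ (I ^ (c + k) • ⊤ ⊓ A : Submodule R R) :=
        ⟨by simpa [K] using ha, a.2⟩
      rw [hc', Nat.add_sub_cancel_left] at this
      exact Submodule.smul_mono le_rfl inf_le_right this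
    have h2 : ∀ r ∈ I ^ k • A, ∀ hr : r ∈ A, g ⟨r, hr⟩ = 0 := by
      intro r hr
      induction hr using Submodule.smul_induction_on' with
      | smul b hb y hy =>
        intro hr
        have : (⟨b • y, hr⟩ : A) = b • ⟨y, hy⟩ := rfl
        rw [this, map_smul, hk b hb]
      | add y hy z hz h1 h2 =>
        intro hr
        have hy' : y ∈ A := (Submodule.smul_le_right : I ^ k • A ≤ A) hy
        have hz' : z ∈ A := (Submodule.smul_le_right : I ^ k • A ≤ A) hz
        have : (⟨y + z, hr⟩ : A) = ⟨y, hy'⟩ + ⟨z, hz'⟩ := rfl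
        rw [this, map_add, h1, h2, add_zero]
    simp [h2 a h1 a.2]
  let j : (A ⧸ K) →ₗ[R] R ⧸ I ^ (c + k) := Submodule.mapQ K _ A.subtype le_rfl
  have hj : Function.Injective j := by
    rw [← LinearMap.ker_eq_bot, Submodule.ker_mapQ]
    simp [K]
  obtain ⟨q, hq⟩ := hE.out j hj (K.liftQ _ hK)
  have h1 : q (Submodule.Quotient.mk 1) ∈ powTorsSub I E := by
    refine ⟨c + k, fun a ha => ?_⟩
    rw [← map_smul, ← Submodule.Quotient.mk_smul, (Submodule.Quotient.mk_eq_zero _).2, map_zero]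
    simpa using ha
  refine ⟨LinearMap.toSpanSingleton R _ ⟨_, h1⟩, fun r hr => Subtype.ext ?_⟩
  have h2 := hq (Submodule.Quotient.mk ⟨r, hr⟩)
  change q (Submodule.Quotient.mk r) = g ⟨r, hr⟩ at h2
  rw [← h2, LinearMap.toSpanSingleton_apply, Submodule.coe_smul, ← map_smul,
    ← Submodule.Quotient.mk_smul, smul_eq_mul, mul_one]

end Torsion

section TorsionVanishing

variable {R : Type u} [CommRing R] {I : Ideal R}

lemma PowTors.of_surjective {N N' : Type*} [AddCommGroup N] [Module R N] [AddCommGroup N']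
    [Module R N'] (hN : PowTors I N) (g : N →ₗ[R] N') (hg : Function.Surjective g) :
    PowTors I N' := by
  intro n'
  obtain ⟨n, rfl⟩ := hg n'
  obtain ⟨k, hk⟩ := hN n
  exact ⟨k, fun a ha => by rw [← map_smul, hk a ha, map_zero]⟩

/-- The map `R ⧸ I ^ t ⟶ N` sending `1` to an element killed by `I ^ t`. -/
noncomputable def powQuotDesc {N : ModuleCat.{u} R} {t : ℕ} (n : N)
    (hn : ∀ a ∈ I ^ t, a • n = 0) : powQuot I t ⟶ N :=
  ModuleCat.ofHom (Submodule.liftQ (I ^ t) (LinearMap.toSpanSingleton R N n) hn)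

lemma powQuotDesc_one {N : ModuleCat.{u} R} {t : ℕ} (n : N) (hn : ∀ a ∈ I ^ t, a • n = 0) :
    powQuotDesc n hn (1 : R ⧸ I ^ t) = n :=
  one_smul R n

lemma powQuot_hom_ext {N : ModuleCat.{u} R} {t : ℕ} {f g : powQuot I t ⟶ N}
    (h : f (1 : R ⧸ I ^ t) = g (1 : R ⧸ I ^ t)) : f = g := by
  ext
  exact h

/-- A torsion module embeds in an injective torsion module. -/
lemma exists_injective_powTors [IsNoetherianRing R] (T : ModuleCat.{u} R) (hT : PowTors I T) :
    ∃ (J : ModuleCat.{u} R) (f : T ⟶ J), Mono f ∧ Injective J ∧ PowTors I J := by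
  let E := Injective.under T
  have hE : Injective E := Injective.injective_under T
  have : Module.Injective R E :=
    Module.injective_module_of_injective_object R E (inj := hE)
  let f : T →ₗ[R] powTorsSub I E := (Injective.ι T).hom.codRestrict _ (fun n => by
    obtain ⟨k, hk⟩ := hT n
    exact ⟨k, fun a ha => by rw [← map_smul, hk a ha, map_zero]⟩)
  have := injective_powTorsSub (I := I) E
  refine ⟨ModuleCat.of R (powTorsSub I E), ModuleCat.ofHom f, ?_,
    Module.injective_object_of_injective_module R _, powTors_powTorsSub E⟩
  rw [ModuleCat.mono_iff_injective]
  have h := (ModuleCat.mono_iff_injective (Injective.ι T)).1 inferInstance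
  exact fun x y hxy => h congr(($hxy).1)

/-- Higher local cohomology with support in `I` vanishes on `I`-power torsion modules. -/
lemma PowTors.van_succ [IsNoetherianRing R] (i : ℕ) (T : ModuleCat.{u} R) (hT : PowTors I T) :
    Van I (i + 1) T := by
  induction i generalizing T with
  | zero =>
    obtain ⟨J, f, hf, hJ, hJT⟩ := exists_injective_powTors T hT
    have hS : (ShortComplex.mk f (cokernel.π f) (cokernel.condition f)).ShortExact :=
      { exact := ShortComplex.exact_cokernel f }
    intro t e
    obtain ⟨φ, hφ⟩ := Ext.covariant_sequence_exact₁ _ hS e (Ext.eq_zero_of_injective _) rfl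
    obtain ⟨φ, rfl⟩ := (Ext.mk₀_bijective _ _).2 φ
    obtain ⟨z, hz⟩ := (ModuleCat.epi_iff_surjective (cokernel.π f)).1 inferInstance
      (φ (1 : R ⧸ I ^ t))
    obtain ⟨k, hk⟩ := hJT z
    refine ⟨max t k, le_max_left _ _, ?_⟩
    let ψ : powQuot I (max t k) ⟶ J :=
      powQuotDesc z (fun a ha => hk a (Ideal.pow_le_pow_right (le_max_right _ _) ha))
    have hψ : powProj I (le_max_left t k) ≫ φ = ψ ≫ cokernel.π f := by
      apply powQuot_hom_ext
      change φ (1 : R ⧸ I ^ t) = cokernel.π f (ψ (1 : R ⧸ I ^ _))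
      rw [← hz]
      exact congrArg _ (powQuotDesc_one z _).symm
    rw [← hφ, ← extRes_comp, extRes_apply, Ext.mk₀_comp_mk₀, hψ, ← Ext.mk₀_comp_mk₀,
      Ext.comp_assoc _ _ _ _ (zero_add 1) (by omega)]
    rw [hS.comp_extClass, Ext.comp_zero]
  | succ i ih =>
    obtain ⟨J, f, hf, hJ, hJT⟩ := exists_injective_powTors T hT
    have hS : (ShortComplex.mk f (cokernel.π f) (cokernel.condition f)).ShortExact :=
      { exact := ShortComplex.exact_cokernel f }
    refine Van.left hS (ih _ (hJT.of_surjective (cokernel.π f).hom ?_)) ?_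
    · exact (ModuleCat.epi_iff_surjective (cokernel.π f)).1 inferInstance
    · intro t e
      exact ⟨t, le_rfl, by rw [Ext.eq_zero_of_injective e, map_zero]⟩

/-- `H^0_I(T) = T` for an `I`-power torsion module `T`. -/
lemma PowTors.nonempty_limExt_zero (T : ModuleCat.{u} R) (hT : PowTors I T) :
    Nonempty (limExt I 0 T ≃ₗ[R] T) := by
  let ev : ∀ t, Ext (powQuot I t) T 0 →ₗ[R] T := fun t =>
    { toFun := fun e => Ext.linearEquiv₀ (R := R) e (1 : R ⧸ I ^ t)
      map_add' := fun e e' => by rw [map_add]; rfl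
      map_smul' := fun r e => by rw [map_smul]; rfl }
  have hev : ∀ t (φ : powQuot I t ⟶ T), ev t (Ext.mk₀ φ) = φ (1 : R ⧸ I ^ t) := by
    intro t φ
    have : Ext.linearEquiv₀ (R := R) (Ext.mk₀ φ) = φ :=
      (Ext.linearEquiv₀ (R := R)).apply_symm_apply φ
    change Ext.linearEquiv₀ (R := R) (Ext.mk₀ φ) (1 : R ⧸ I ^ t) = _
    rw [this]
  let Φ : limExt I 0 T →ₗ[R] T := Module.DirectLimit.lift R ℕ _ _ ev (by
    intro t t' h e
    obtain ⟨φ, rfl⟩ := (Ext.mk₀_bijective _ _).2 e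
    rw [extRes_apply, Ext.mk₀_comp_mk₀, hev, hev]
    rfl)
  refine ⟨LinearEquiv.ofBijective Φ ⟨?_, ?_⟩⟩
  · rw [injective_iff_map_eq_zero]
    intro z hz
    obtain ⟨t, e, rfl⟩ := Module.DirectLimit.exists_of z
    obtain ⟨φ, rfl⟩ := (Ext.mk₀_bijective _ _).2 e
    rw [Module.DirectLimit.lift_of, hev] at hz
    have : φ = 0 := powQuot_hom_ext hz
    rw [this, Ext.mk₀_zero, map_zero]
  · intro n
    obtain ⟨k, hk⟩ := hT n
    refine ⟨Module.DirectLimit.of R ℕ _ _ k (Ext.mk₀ (powQuotDesc n hk)), ?_⟩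
    rw [Module.DirectLimit.lift_of, hev, powQuotDesc_one]

end TorsionVanishing

/-! ### The top local cohomology module -/

section TopDegree

variable {R : Type u} [CommRing R]

/-- The quotient `N_x ⧸ im(N → N_x)`, that is `H^1_{(x)}(N)`. -/
abbrev locQuot (x : R) (N : Type u) [AddCommGroup N] [Module R N] : Type u :=
  LocalizedModule (Submonoid.powers x) N ⧸
    LinearMap.range (LocalizedModule.mkLinearMap (Submonoid.powers x) N)

/-- The iterated quotient `H^1_{(x_s)}(⋯ H^1_{(x_1)}(N))` for a list `x_1, …, x_s`. -/
noncomputable def iterLocQuot : List R → ModuleCat.{u} R → ModuleCat.{u} R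
  | [], N => N
  | x :: xs, N => iterLocQuot xs (ModuleCat.of R (locQuot x N))

/-- Every cyclic submodule of `N` becomes `I`-power torsion modulo the elements of the list `xs`. -/
def TorsMod (I : Ideal R) (xs : List R) (N : Type*) [AddCommGroup N] [Module R N] : Prop :=
  ∀ n : N, I ≤ (Ideal.torsionOf R N n ⊔ Ideal.span {x | x ∈ xs}).radical

lemma TorsMod.powTors [IsNoetherianRing R] {I : Ideal R} {N : Type*} [AddCommGroup N] [Module R N]
    (hN : TorsMod I [] N) : PowTors I N := by
  intro n
  have h : I ≤ (Ideal.torsionOf R N n).radical := by simpa using hN n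
  obtain ⟨k, hk⟩ := Ideal.exists_pow_le_of_le_radical_of_fg h (IsNoetherian.noetherian I)
  exact ⟨k, fun a ha => hk ha⟩

lemma TorsMod.of_cons {I : Ideal R} {x : R} {xs : List R} {N N' : Type*} [AddCommGroup N]
    [Module R N] [AddCommGroup N'] [Module R N'] (hN : TorsMod I (x :: xs) N)
    (h : ∀ n' : N', ∃ n : N, Ideal.torsionOf R N n ≤ Ideal.torsionOf R N' n' ∧
      ∃ l : ℕ, x ^ l • n' = 0) : TorsMod I xs N' := by
  intro n'
  obtain ⟨n, hn, l, hl⟩ := h n'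
  refine (hN n).trans (Ideal.radical_le_radical_iff.2 (sup_le ?_ (Ideal.span_le.2 ?_)))
  · exact (hn.trans le_sup_left).trans Ideal.le_radical
  · intro y hy
    rcases List.mem_cons.1 hy with rfl | hy
    · exact ⟨l, Ideal.mem_sup_left hl⟩
    · exact Ideal.le_radical (Ideal.mem_sup_right (Ideal.subset_span hy))

lemma bijective_smul_of_isLocalizedModule (x : R) {N N' : Type*} [AddCommGroup N] [Module R N]
    [AddCommGroup N'] [Module R N'] (f : N →ₗ[R] N')
    [IsLocalizedModule (Submonoid.powers x) f] : Function.Bijective (fun n : N' => x • n) :=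
  (Module.End.isUnit_iff _).1
    (IsLocalizedModule.map_units (S := Submonoid.powers x) f ⟨x, Submonoid.mem_powers x⟩)

/-- Local cohomology above and in degree the number `s` of elements `x_1, …, x_s ∈ I` modulo which
`N` is `I`-power torsion: it vanishes above degree `s`, and is `H^1_{(x_s)}(⋯ H^1_{(x_1)}(N))` in
degree `s`. -/
theorem van_and_limExt_equiv [IsNoetherianRing R] {I : Ideal R} (xs : List R)
    (hxs : ∀ x ∈ xs, x ∈ I) (N : ModuleCat.{u} R) (hN : TorsMod I xs N) :
    (∀ i, xs.length < i → Van I i N) ∧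
      Nonempty (limExt I xs.length N ≃ₗ[R] iterLocQuot xs N) := by
  induction xs generalizing N with
  | nil =>
    refine ⟨fun i hi => ?_, hN.powTors.nonempty_limExt_zero N⟩
    obtain ⟨i, rfl⟩ := Nat.exists_eq_succ_of_ne_zero hi.ne'
    exact hN.powTors.van_succ i N
  | cons x xs ih =>
    have hx : x ∈ I := hxs x (by simp)
    replace ih := ih (fun y hy => hxs y (by simp [hy]))
    let f := LocalizedModule.mkLinearMap (Submonoid.powers x) N
    have hT := ih (ModuleCat.of R (LinearMap.ker f)) (hN.of_cons (by
      rintro ⟨n, hn⟩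
      refine ⟨n, fun a ha => Subtype.ext ha, ?_⟩
      obtain ⟨⟨_, l, rfl⟩, hl⟩ := (IsLocalizedModule.eq_zero_iff (Submonoid.powers x) f).1 hn
      exact ⟨l, Subtype.ext hl⟩))
    have hQ := ih (ModuleCat.of R (locQuot x N)) (hN.of_cons (by
      intro q
      obtain ⟨q, rfl⟩ := Submodule.Quotient.mk_surjective _ q
      obtain ⟨⟨n, ⟨_, l, rfl⟩⟩, rfl⟩ := IsLocalizedModule.mk'_surjective (Submonoid.powers x) f q
      refine ⟨n, fun a ha => ?_, l, ?_⟩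
      · rw [Ideal.mem_torsionOf_iff] at ha ⊢
        rw [Function.uncurry_apply_pair, ← Submodule.Quotient.mk_smul,
          ← IsLocalizedModule.mk'_smul, ha, IsLocalizedModule.mk'_zero, Submodule.Quotient.mk_zero]
      · rw [Function.uncurry_apply_pair, ← Submodule.Quotient.mk_smul,
          Submodule.Quotient.mk_eq_zero]
        exact ⟨n, (IsLocalizedModule.mk'_cancel' f n (⟨x ^ l, l, rfl⟩ : Submonoid.powers x)).symm⟩))
    have hL : ∀ i, Van I i (ModuleCat.of R (LocalizedModule (Submonoid.powers x) N)) :=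
      van_of_bijective hx (bijective_smul_of_isLocalizedModule x f)
    have hS₁ : (ShortComplex.mk (ModuleCat.ofHom (LinearMap.ker f).subtype)
        (ModuleCat.ofHom f.rangeRestrict) (by ext n; exact n.2)).ShortExact := by
      refine ModuleCat.shortComplex_shortExact _ ?_ (LinearMap.ker f).injective_subtype
        f.surjective_rangeRestrict
      intro n
      change f.rangeRestrict n = 0 ↔ n ∈ Set.range (LinearMap.ker f).subtype
      simp [← LinearMap.mem_ker]
    have hS₂ : (ShortComplex.mk (ModuleCat.ofHom (LinearMap.range f).subtype)
        (ModuleCat.ofHom (LinearMap.range f).mkQ) (by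
          ext n; exact (Submodule.Quotient.mk_eq_zero _).2 n.2)).ShortExact := by
      refine ModuleCat.shortComplex_shortExact _ ?_ (LinearMap.range f).injective_subtype
        (Submodule.mkQ_surjective _)
      intro n
      change (LinearMap.range f).mkQ n = 0 ↔ n ∈ Set.range (LinearMap.range f).subtype
      simp
    refine ⟨fun i hi => ?_, ?_⟩
    · obtain ⟨i, rfl⟩ := Nat.exists_eq_succ_of_ne_zero (Nat.ne_zero_of_lt hi)
      rw [List.length_cons] at hi
      exact Van.middle hS₁ (hT.1 _ (by omega)) (Van.left hS₂ (hQ.1 i (by omega)) (hL _))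
    · obtain ⟨e₁⟩ := nonempty_limExt_equiv_right hS₁ (i := xs.length + 1)
        (hT.1 _ (by omega)) (hT.1 _ (by omega))
      obtain ⟨e₂⟩ := nonempty_limExt_equiv_connecting hS₂ (i := xs.length) (hL _) (hL _)
      obtain ⟨e₃⟩ := hQ.2
      exact ⟨e₁ ≪≫ₗ e₂.symm ≪≫ₗ e₃⟩

end TopDegree

/-! ### The Frobenius functor -/

section Frobenius

variable {R : Type u} [CommRing R]

/-- `N_x ⧸ im(N → N_x)` can be computed from any model of the localization and of the cokernel. -/
lemma nonempty_equiv_locQuot {x : R} {N N₁ Q : Type u} [AddCommGroup N] [Module R N]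
    [AddCommGroup N₁] [Module R N₁] [AddCommGroup Q] [Module R Q] (f : N →ₗ[R] N₁)
    (g : N₁ →ₗ[R] Q) [IsLocalizedModule (Submonoid.powers x) f] (hg : Function.Surjective g)
    (hfg : Function.Exact f g) : Nonempty (Q ≃ₗ[R] locQuot x N) := by
  let e := IsLocalizedModule.iso (Submonoid.powers x) f
  have h : (LinearMap.range (LocalizedModule.mkLinearMap (Submonoid.powers x) N)).map
      e.toLinearMap = LinearMap.ker g := by
    rw [LinearMap.exact_iff.1 hfg, ← IsLocalizedModule.iso_symm_comp (Submonoid.powers x) f,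
      ← LinearMap.range_comp, ← LinearMap.comp_assoc]
    simp [e]
  exact ⟨((Submodule.Quotient.equiv _ _ e h) ≪≫ₗ g.quotKerEquivOfSurjective hg).symm⟩

lemma nonempty_locQuot_congr (x : R) {N N' : Type u} [AddCommGroup N] [Module R N]
    [AddCommGroup N'] [Module R N'] (e : N ≃ₗ[R] N') :
    Nonempty (locQuot x N' ≃ₗ[R] locQuot x N) :=
  nonempty_equiv_locQuot
    (LocalizedModule.mkLinearMap (Submonoid.powers x) N' ∘ₗ e.toLinearMap)
    (Submodule.mkQ _) (Submodule.mkQ_surjective _) (by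
      rw [LinearMap.exact_iff, Submodule.ker_mkQ, LinearMap.range_comp_of_range_eq_top]
      exact e.range)

lemma nonempty_iterLocQuot_congr (xs : List R) {N N' : ModuleCat.{u} R}
    (h : Nonempty (N ≃ₗ[R] N')) : Nonempty (iterLocQuot xs N ≃ₗ[R] iterLocQuot xs N') := by
  induction xs generalizing N N' with
  | nil => exact h
  | cons x xs ih =>
    obtain ⟨e⟩ := h
    exact ih (nonempty_locQuot_congr x e.symm)

variable (p : ℕ) [Fact p.Prime] [CharP R p]

/-- The Frobenius functor on morphisms. -/
noncomputable def frobMap {N N' : Type u} [AddCommGroup N] [Module R N] [AddCommGroup N']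
    [Module R N'] (f : N →ₗ[R] N') : FrobModule R p N →ₗ[R] FrobModule R p N' where
  toFun := f.lTensor (FrobTwist R p)
  map_add' := (f.lTensor (FrobTwist R p)).map_add
  map_smul' r z := (TensorProduct.AlgebraTensorModule.map
    (LinearMap.id : FrobTwist R p →ₗ[FrobTwist R p] FrobTwist R p) f).map_smul
      (FrobTwist.of R p r) (z : FrobTwist R p ⊗[R] N)

/-- The identification of `R^f ⊗ N` with `FrobModule R p N`. It is only additive, since the former
carries the `R`-action of the balanced tensor product. -/
noncomputable def toFrob (N : Type u) [AddCommGroup N] [Module R N] :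
    FrobTwist R p ⊗[R] N ≃+ FrobModule R p N := AddEquiv.refl _

lemma toFrob_smul {N : Type u} [AddCommGroup N] [Module R N] (r : R)
    (z : FrobTwist R p ⊗[R] N) : toFrob p N (r • z) = r ^ p • toFrob p N z :=
  (algebraMap_smul (FrobTwist R p) r z).symm

lemma toFrob_pow_smul {N : Type u} [AddCommGroup N] [Module R N] (r : R) (l : ℕ)
    (z : FrobTwist R p ⊗[R] N) : toFrob p N (r ^ l • z) = r ^ (l * p) • toFrob p N z := by
  rw [toFrob_smul, pow_mul]

lemma frobMap_toFrob {N N' : Type u} [AddCommGroup N] [Module R N] [AddCommGroup N']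
    [Module R N'] (f : N →ₗ[R] N') (z : FrobTwist R p ⊗[R] N) :
    frobMap p f (toFrob p N z) = toFrob p N' (f.lTensor (FrobTwist R p) z) := rfl

lemma nonempty_frobModule_congr {N N' : Type u} [AddCommGroup N] [Module R N] [AddCommGroup N']
    [Module R N'] (e : N ≃ₗ[R] N') : Nonempty (FrobModule R p N ≃ₗ[R] FrobModule R p N') :=
  ⟨LinearEquiv.ofBijective (frobMap p e.toLinearMap)
    (LinearEquiv.lTensor (FrobTwist R p) e).bijective⟩

/-- The Frobenius functor commutes with localization at `x`, since inverting `x` and inverting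
`x ^ p` are the same. -/
lemma isLocalizedModule_frobMap (x : R) {N N' : Type u} [AddCommGroup N] [Module R N]
    [AddCommGroup N'] [Module R N'] (f : N →ₗ[R] N') [IsLocalizedModule (Submonoid.powers x) f] :
    IsLocalizedModule (Submonoid.powers x) (frobMap p f) := by
  have hp : p ≠ 0 := (Fact.out : p.Prime).ne_zero
  have h : IsLocalizedModule (Submonoid.powers x) (f.lTensor (FrobTwist R p)) := by
    have h' : IsLocalizedModule (Submonoid.powers x) (f.rTensor (FrobTwist R p)) :=
      IsLocalizedModule.rTensor (A := R) (Submonoid.powers x) f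
    rw [← LinearMap.comm_comp_rTensor_comp_comm_eq]
    infer_instance
  constructor
  · rintro ⟨_, l, rfl⟩
    rw [← isUnit_pow_iff hp, ← map_pow, Module.End.isUnit_iff]
    have hl := (Module.End.isUnit_iff _).1 (h.map_units ⟨x ^ l, l, rfl⟩)
    rw [← (toFrob p N').bijective.of_comp_iff]
    convert (toFrob p N').bijective.comp hl using 1
    funext z
    exact (toFrob_smul p (x ^ l) z).symm
  · intro y
    obtain ⟨y, rfl⟩ := (toFrob p N').surjective y
    obtain ⟨⟨z, ⟨_, l, rfl⟩⟩, hz⟩ := IsLocalizedModule.surj (Submonoid.powers x)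
      (f.lTensor (FrobTwist R p)) y
    refine ⟨⟨toFrob p N z, ⟨x ^ (l * p), l * p, rfl⟩⟩, ?_⟩
    exact (toFrob_pow_smul p x l y).symm.trans (congrArg (toFrob p N') hz)
  · intro y z hyz
    obtain ⟨y, rfl⟩ := (toFrob p N).surjective y
    obtain ⟨z, rfl⟩ := (toFrob p N).surjective z
    obtain ⟨⟨_, l, rfl⟩, hl⟩ := h.exists_of_eq hyz
    refine ⟨⟨x ^ (l * p), l * p, rfl⟩, ?_⟩
    exact (toFrob_pow_smul p x l y).symm.trans
      ((congrArg (toFrob p N) hl).trans (toFrob_pow_smul p x l z))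

/-- The Frobenius functor is right exact and commutes with localization, hence commutes with
`H^1_{(x)}`. -/
lemma nonempty_frobModule_locQuot (x : R) (N : Type u) [AddCommGroup N] [Module R N] :
    Nonempty (FrobModule R p (locQuot x N) ≃ₗ[R] locQuot x (FrobModule R p N)) := by
  let f := LocalizedModule.mkLinearMap (Submonoid.powers x) N
  have := isLocalizedModule_frobMap p x f
  exact nonempty_equiv_locQuot (frobMap p f) (frobMap p (LinearMap.range f).mkQ)
    (LinearMap.lTensor_surjective _ (Submodule.mkQ_surjective _))
    (lTensor_exact (FrobTwist R p) (LinearMap.exact_map_mkQ_range f)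
      (Submodule.mkQ_surjective _))

lemma nonempty_frobModule_iterLocQuot (xs : List R) (N : ModuleCat.{u} R) :
    Nonempty (FrobModule R p (iterLocQuot xs N) ≃ₗ[R]
      iterLocQuot xs (ModuleCat.of R (FrobModule R p N))) := by
  induction xs generalizing N with
  | nil => exact ⟨LinearEquiv.refl R _⟩
  | cons x xs ih =>
    obtain ⟨e⟩ := ih (ModuleCat.of R (locQuot x N))
    obtain ⟨e'⟩ := nonempty_iterLocQuot_congr xs
      (N := ModuleCat.of R (FrobModule R p (locQuot x N)))
      (N' := ModuleCat.of R (locQuot x (FrobModule R p N))) (nonempty_frobModule_locQuot p x N)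
    exact ⟨e ≪≫ₗ e'⟩

lemma TorsMod.of_annihilator {I : Ideal R} {xs : List R} {N : Type u} [AddCommGroup N]
    [Module R N] (h : I ≤ (Module.annihilator R N ⊔ Ideal.span {x | x ∈ xs}).radical) :
    TorsMod I xs N :=
  fun n => h.trans (Ideal.radical_mono (sup_le_sup_right
    (fun _ ha => Module.mem_annihilator.1 ha n) _))

lemma TorsMod.frobModule {I : Ideal R} {xs : List R} {N : Type u} [AddCommGroup N]
    [Module R N] (h : I ≤ (Module.annihilator R N ⊔ Ideal.span {x | x ∈ xs}).radical) :
    TorsMod I xs (FrobModule R p N) := by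
  refine TorsMod.of_annihilator (h.trans (Ideal.radical_le_radical_iff.2 (sup_le ?_ ?_)))
  · intro a ha
    refine ⟨p, Ideal.mem_sup_left (Module.mem_annihilator.2 fun z => ?_)⟩
    obtain ⟨z, rfl⟩ := (toFrob p N).surjective z
    rw [← toFrob_smul]
    suffices h0 : a • z = 0 by rw [h0, map_zero]
    induction z using TensorProduct.induction_on with
    | zero => exact smul_zero a
    | tmul b n => rw [← TensorProduct.tmul_smul, Module.mem_annihilator.1 ha, TensorProduct.tmul_zero]
    | add y z hy hz => rw [smul_add, hy, hz, add_zero]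
  · exact le_sup_right.trans Ideal.le_radical

end Frobenius

/-! ### Systems of parameters -/

section Parameters

/-- Existence of a system of parameters: `s = dim R ⧸ J` elements of the maximal ideal which generate
an ideal primary to the maximal ideal modulo `J`. -/
lemma exists_parameters (R : Type u) [CommRing R] [IsNoetherianRing R] [IsLocalRing R]
    (J : Ideal R) (s : ℕ) (hs : ringKrullDim (R ⧸ J) = s) :
    ∃ xs : List R, xs.length = s ∧ (∀ x ∈ xs, x ∈ maximalIdeal R) ∧
      maximalIdeal R ≤ (J ⊔ Ideal.span {x | x ∈ xs}).radical := by
  have : Nontrivial (R ⧸ J) := by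
    by_contra h
    rw [not_nontrivial_iff_subsingleton] at h
    rw [ringKrullDim_eq_bot_of_subsingleton] at hs
    exact absurd hs.symm (WithBot.coe_ne_bot)
  let π := Ideal.Quotient.mk J
  have hπ : Function.Surjective π := Ideal.Quotient.mk_surjective
  have : IsLocalRing (R ⧸ J) := .of_surjective' π hπ
  have hloc : IsLocalHom π := IsLocalHom.of_surjective π hπ
  obtain ⟨t, ht, htc⟩ :=
    (maximalIdeal (R ⧸ J)).exists_finset_card_eq_height_of_isNoetherianRing
  have htc' : t.card = s := by
    have h1 := IsLocalRing.maximalIdeal_height_eq_ringKrullDim (R := R ⧸ J)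
    rw [hs, ← htc] at h1
    exact_mod_cast h1
  have hrad : maximalIdeal (R ⧸ J) ≤ (Ideal.span (t : Set (R ⧸ J))).radical := by
    rw [Ideal.radical_eq_sInf]
    refine le_sInf fun q ⟨hq, hqp⟩ => ?_
    exact ht.2 ⟨hqp, hq⟩ (IsLocalRing.le_maximalIdeal hqp.ne_top)
  have hmap : ∀ y, π (Function.surjInv hπ y) = y := Function.surjInv_eq hπ
  let xs := t.toList.map (Function.surjInv hπ)
  have hxs : Ideal.map π (Ideal.span {x | x ∈ xs}) = Ideal.span (t : Set (R ⧸ J)) := by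
    rw [Ideal.map_span]
    congr 1
    ext y
    simp [xs, hmap]
  refine ⟨xs, by simp [xs, htc'], ?_, ?_⟩
  · intro x hx
    obtain ⟨y, hy, rfl⟩ := List.mem_map.1 hx
    have h1 : y ∈ maximalIdeal (R ⧸ J) := ht.1.2 (Ideal.subset_span (by simpa using hy))
    rw [IsLocalRing.mem_maximalIdeal, mem_nonunits_iff] at h1 ⊢
    intro h2
    exact h1 (hmap y ▸ h2.map π)
  · have h1 : J ⊔ Ideal.span {x | x ∈ xs} = (Ideal.span (t : Set (R ⧸ J))).comap π := by
      rw [← hxs, Ideal.comap_map_of_surjective' π hπ, Ideal.mk_ker, sup_comm]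
    rw [h1, ← Ideal.comap_radical]
    intro x hx
    refine hrad ?_
    rw [IsLocalRing.mem_maximalIdeal, mem_nonunits_iff] at hx ⊢
    exact fun h => hx (isUnit_of_map_unit π x h)

end Parameters

end FrobLC

/-- Let `(R, m)` be a Noetherian local ring of prime characteristic `p` and
`M` a finitely generated `R`-module of dimension `s`.  Then
`F_R(H^s_m(M)) ≅ H^s_m(F_R(M))`. -/
theorem frobModule_localCohomology_top (R : Type u) [CommRing R] [IsNoetherianRing R]
    [IsLocalRing R] (p : ℕ) [Fact p.Prime] [CharP R p]
    (M : Type u) [AddCommGroup M] [Module R M] [Module.Finite R M]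
    (s : ℕ) (hs : ringKrullDim (R ⧸ Module.annihilator R M) = s) :
    Nonempty
      (FrobModule R p ((localCohomology (maximalIdeal R) s).obj (ModuleCat.of R M)) ≃ₗ[R]
        (localCohomology (maximalIdeal R) s).obj (ModuleCat.of R (FrobModule R p M))) := by
  obtain ⟨xs, rfl, hxs, hrad⟩ := FrobLC.exists_parameters R _ s hs
  have h₁ := FrobLC.TorsMod.of_annihilator hrad
  have h₂ := FrobLC.TorsMod.frobModule p hrad
  obtain ⟨e₁⟩ := FrobLC.nonempty_localCohomology_equiv (maximalIdeal R) xs.length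
    (ModuleCat.of R M)
  obtain ⟨e₂⟩ := (FrobLC.van_and_limExt_equiv xs hxs (ModuleCat.of R M) h₁).2
  obtain ⟨e₃⟩ := FrobLC.nonempty_frobModule_congr p (e₁ ≪≫ₗ e₂)
  obtain ⟨e₄⟩ := FrobLC.nonempty_frobModule_iterLocQuot p xs (ModuleCat.of R M)
  obtain ⟨e₅⟩ := (FrobLC.van_and_limExt_equiv xs hxs (ModuleCat.of R (FrobModule R p M)) h₂).2
  obtain ⟨e₆⟩ := FrobLC.nonempty_localCohomology_equiv (maximalIdeal R) xs.length
    (ModuleCat.of R (FrobModule R p M))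
  exact ⟨e₃ ≪≫ₗ e₄ ≪≫ₗ e₅.symm ≪≫ₗ e₆.symm⟩
end
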